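/- Let F ⊆ ℝ be a non-empty bounded set with dim_H F > 0. Then dim_A (FF + F) ≥ min{2 · dim_A F, 1}, where FF + F = {xy + z : x, y, z ∈ F}. -/

import Mathlib

open Metric MeasureTheory Filter Set
open scoped ENNReal NNReal Pointwise Topology

noncomputable section

/-- The Assouad dimension of a subset of a (pseudo)metric space: the infimum of all
`α ≥ 0` for which there is `C > 0` such that for every `x ∈ E` and all scales `0 < r < R`,
the set `E ∩ B(x,R)` can be covered by at most `C (R/r)^α` sets of diameter at most `r`. -/
def assouadDim {X : Type*} [PseudoMetricSpace X] (E : Set X) : ℝ :=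
  sInf {α : ℝ | 0 ≤ α ∧ ∃ C : ℝ, 0 < C ∧ ∀ x ∈ E, ∀ r R : ℝ, 0 < r → r < R →
    ∃ 𝒰 : Finset (Set X), (E ∩ closedBall x R ⊆ ⋃ U ∈ 𝒰, U) ∧
      (∀ U ∈ 𝒰, EMetric.diam U ≤ ENNReal.ofReal r) ∧
      ((𝒰.card : ℝ) ≤ C * (R / r) ^ α)}

section Entropy
open scoped Classical

variable {Ω α β γ δ : Type*}

/-- The number of points of `s` on which `g` takes the same value as at `x`. -/
def fiberCard (s : Finset Ω) (g : Ω → α) (x : Ω) : ℝ := ((s.filter fun y => g y = g x).card : ℝ)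

/-- The (unnormalised) entropy of the partition of `s` into fibres of `g`, for the counting measure.
The normalised conditional entropy of `f` given `g` is
`(entropy s (fun x => (f x, g x)) - entropy s g) / s.card`. -/
def entropy (s : Finset Ω) (g : Ω → α) : ℝ := -∑ x ∈ s, Real.log (fiberCard s g x)

theorem fiberCard_pos {s : Finset Ω} (g : Ω → α) {x : Ω} (hx : x ∈ s) : 0 < fiberCard s g x := by
  unfold fiberCard
  exact_mod_cast Finset.card_pos.2 ⟨x, by simp [hx]⟩

theorem sum_div_fiberCard (s : Finset Ω) (g : Ω → α) (w : α → ℝ) :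
    ∑ x ∈ s, w (g x) / fiberCard s g x = ∑ b ∈ s.image g, w b := by
  have h := Finset.sum_comp (s := s)
    (fun b : α => w b / ((s.filter fun y => g y = b).card : ℝ)) g
  unfold fiberCard
  rw [h]
  refine Finset.sum_congr rfl fun b hb => ?_
  obtain ⟨x, hx, rfl⟩ := Finset.mem_image.1 hb
  have := fiberCard_pos g hx
  unfold fiberCard at this
  rw [nsmul_eq_mul]
  field_simp

theorem sum_joint_le (s : Finset Ω) (f : Ω → α) (g : Ω → β) (w : α → β → ℝ)
    (hw : ∀ a b, 0 ≤ w a b) :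
    ∑ x ∈ s, w (f x) (g x) * fiberCard s f x * fiberCard s g x /
        fiberCard s (fun x => (f x, g x)) x ≤
      ∑ x ∈ s, ∑ y ∈ s, w (f x) (g y) := by
  have h := sum_div_fiberCard s (fun x => (f x, g x))
    (fun ab => w ab.1 ab.2 * ((s.filter fun y => f y = ab.1).card : ℝ) *
      ((s.filter fun y => g y = ab.2).card : ℝ))
  have hl : ∑ x ∈ s, w (f x) (g x) * fiberCard s f x * fiberCard s g x /
        fiberCard s (fun x => (f x, g x)) x =
      ∑ ab ∈ s.image (fun x => (f x, g x)), w ab.1 ab.2 *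
        ((s.filter fun y => f y = ab.1).card : ℝ) *
          ((s.filter fun y => g y = ab.2).card : ℝ) := by
    refine h.trans (Finset.sum_congr ?_ fun _ _ => rfl)
    ext
    simp
  have hr : ∑ x ∈ s, ∑ y ∈ s, w (f x) (g y) =
      ∑ ab ∈ s.image f ×ˢ s.image g, w ab.1 ab.2 *
        ((s.filter fun y => f y = ab.1).card : ℝ) *
          ((s.filter fun y => g y = ab.2).card : ℝ) := by
    rw [Finset.sum_product]
    rw [Finset.sum_comp (fun a => ∑ y ∈ s, w a (g y)) f]
    refine Finset.sum_congr rfl fun a _ => ?_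
    rw [Finset.sum_comp (fun b => w a b) g, nsmul_eq_mul, Finset.mul_sum]
    refine Finset.sum_congr rfl fun b _ => ?_
    rw [nsmul_eq_mul]
    ring
  rw [hl, hr]
  refine Finset.sum_le_sum_of_subset_of_nonneg ?_ ?_
  · intro ab hab
    obtain ⟨x, hx, rfl⟩ := Finset.mem_image.1 hab
    simp only [Finset.mem_product]
    exact ⟨Finset.mem_image_of_mem _ hx, Finset.mem_image_of_mem _ hx⟩
  · intro ab _ _
    have := hw ab.1 ab.2
    positivity

theorem entropy_mono {s : Finset Ω} {f : Ω → α} {g : Ω → β}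
    (h : ∀ x ∈ s, ∀ y ∈ s, g x = g y → f x = f y) : entropy s f ≤ entropy s g := by
  unfold entropy
  refine neg_le_neg (Finset.sum_le_sum fun x hx => Real.log_le_log (fiberCard_pos g hx) ?_)
  unfold fiberCard
  refine Nat.cast_le.2 (Finset.card_le_card fun y hy => ?_)
  simp only [Finset.mem_filter] at hy ⊢
  exact ⟨hy.1, h y hy.1 x hx hy.2⟩

theorem entropy_congr {s : Finset Ω} {f : Ω → α} {g : Ω → β}
    (h : ∀ x ∈ s, ∀ y ∈ s, g x = g y ↔ f x = f y) : entropy s f = entropy s g :=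
  le_antisymm (entropy_mono fun x hx y hy => (h x hx y hy).1)
    (entropy_mono fun x hx y hy => (h x hx y hy).2)

theorem entropy_pair_eq_sum (s : Finset Ω) (g : Ω → α) (A : Ω → β) :
    entropy s (fun x => (g x, A x)) =
      ∑ a ∈ s.image A, entropy (s.filter fun x => A x = a) g := by
  unfold entropy
  rw [Finset.sum_neg_distrib]
  congr 1
  rw [← Finset.sum_fiberwise_of_maps_to (s := s) (t := s.image A) (g := A)
    (fun x hx => Finset.mem_image_of_mem A hx)]
  refine Finset.sum_congr rfl fun a _ => Finset.sum_congr rfl fun x hx => ?_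
  unfold fiberCard
  rw [Finset.filter_filter]
  have hxa : A x = a := (Finset.mem_filter.1 hx).2
  congr 3
  ext y
  simp only [Finset.mem_filter, Prod.mk.injEq, hxa]
  tauto

theorem entropy_const (s : Finset Ω) :
    entropy s (fun _ => ()) = -((s.card : ℝ) * Real.log s.card) := by
  simp [entropy, fiberCard]

theorem entropy_eq_sum_const (s : Finset Ω) (A : Ω → β) :
    entropy s A = ∑ a ∈ s.image A, entropy (s.filter fun x => A x = a) (fun _ => ()) := by
  rw [← entropy_pair_eq_sum]
  exact entropy_congr fun x _ y _ => by simp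

theorem card_eq_sum_filter (s : Finset Ω) (A : Ω → β) :
    (s.card : ℝ) = ∑ a ∈ s.image A, ((s.filter fun x => A x = a).card : ℝ) := by
  exact_mod_cast Finset.card_eq_sum_card_image A s

/-- The Gibbs inequality. -/
theorem entropy_sub_const_le (s : Finset Ω) (g : Ω → α) (q : α → ℝ) (hq : ∀ a, 0 < q a)
    (hsum : ∑ b ∈ s.image g, q b ≤ 1) :
    entropy s g - entropy s (fun _ => ()) ≤ ∑ x ∈ s, -Real.log (q (g x)) := by
  have h1 := sum_div_fiberCard s g q
  have key : ∑ x ∈ s, (Real.log (q (g x)) + Real.log s.card - Real.log (fiberCard s g x)) ≤ 0 := by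
    calc ∑ x ∈ s, (Real.log (q (g x)) + Real.log s.card - Real.log (fiberCard s g x))
        ≤ ∑ x ∈ s, ((s.card : ℝ) * (q (g x) / fiberCard s g x) - 1) := by
          refine Finset.sum_le_sum fun x hx => ?_
          have hp := fiberCard_pos g hx
          have hc : (0 : ℝ) < s.card := by exact_mod_cast Finset.card_pos.2 ⟨x, hx⟩
          rw [← Real.log_mul (hq _).ne' hc.ne', ← Real.log_div (by have := hq (g x); positivity) hp.ne']
          have hh : (0 : ℝ) < q (g x) * s.card / fiberCard s g x := by
            have := hq (g x); positivity
          calc _ ≤ q (g x) * s.card / fiberCard s g x - 1 := Real.log_le_sub_one_of_pos hh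
            _ = _ := by ring
      _ = (s.card : ℝ) * ∑ b ∈ s.image g, q b - s.card := by
          rw [Finset.sum_sub_distrib, ← Finset.mul_sum, h1]; simp
      _ ≤ 0 := by nlinarith [Nat.cast_nonneg (α := ℝ) s.card]
  rw [entropy_const]
  unfold entropy
  simp only [Finset.sum_add_distrib, Finset.sum_sub_distrib, Finset.sum_const, nsmul_eq_mul,
    Finset.sum_neg_distrib] at key ⊢
  linarith

theorem entropy_pair_sub_le (s : Finset Ω) (f : Ω → α) (g : Ω → β) (N : ℝ)
    (hN : ∀ b, (((s.filter fun x => g x = b).image f).card : ℝ) ≤ N) :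
    entropy s (fun x => (f x, g x)) - entropy s g ≤ s.card * Real.log N := by
  rw [entropy_pair_eq_sum, entropy_eq_sum_const s g, ← Finset.sum_sub_distrib,
    card_eq_sum_filter s g, Finset.sum_mul]
  refine Finset.sum_le_sum fun b hb => ?_
  obtain ⟨x, hx, rfl⟩ := Finset.mem_image.1 hb
  set t := s.filter fun y => g y = g x
  have hpos : (0 : ℝ) < (t.image f).card := by
    exact_mod_cast Finset.card_pos.2 ⟨f x, Finset.mem_image_of_mem _ (by simp [t, hx])⟩
  have h := entropy_sub_const_le t f (fun _ => 1 / ((t.image f).card : ℝ)) (fun _ => by positivity)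
    (by simp [hpos.ne'])
  refine h.trans ?_
  rw [Finset.sum_const, nsmul_eq_mul]
  refine mul_le_mul_of_nonneg_left ?_ (Nat.cast_nonneg _)
  rw [one_div, Real.log_inv, neg_neg]
  exact Real.log_le_log hpos (hN _)

/-- The Donsker–Varadhan bound for mutual information. -/
theorem sum_le_info (s : Finset Ω) (f : Ω → α) (g : Ω → β) (h : α → β → ℝ) :
    ∑ x ∈ s, h (f x) (g x) ≤
      (entropy s f + entropy s g - entropy s (fun x => (f x, g x)) - entropy s (fun _ => ())) +
      ((∑ x ∈ s, ∑ y ∈ s, Real.exp (h (f x) (g y))) / s.card - s.card) := by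
  rcases s.eq_empty_or_nonempty with rfl | hs
  · simp [entropy]
  have hc : (0 : ℝ) < s.card := by exact_mod_cast Finset.card_pos.2 hs
  have key : ∑ x ∈ s, (h (f x) (g x) + Real.log (fiberCard s f x) + Real.log (fiberCard s g x)
      - Real.log (fiberCard s (fun x => (f x, g x)) x) - Real.log s.card) ≤
      (∑ x ∈ s, ∑ y ∈ s, Real.exp (h (f x) (g y))) / s.card - s.card := by
    calc _ ≤ ∑ x ∈ s, ((Real.exp (h (f x) (g x)) * fiberCard s f x * fiberCard s g x /
            fiberCard s (fun x => (f x, g x)) x) / s.card - 1) := by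
          refine Finset.sum_le_sum fun x hx => ?_
          have h1 := fiberCard_pos f hx
          have h2 := fiberCard_pos g hx
          have h3 := fiberCard_pos (fun x => (f x, g x)) hx
          have h4 := Real.exp_pos (h (f x) (g x))
          have e : h (f x) (g x) + Real.log (fiberCard s f x) + Real.log (fiberCard s g x)
              - Real.log (fiberCard s (fun x => (f x, g x)) x) - Real.log s.card =
              Real.log ((Real.exp (h (f x) (g x)) * fiberCard s f x * fiberCard s g x /
                fiberCard s (fun x => (f x, g x)) x) / s.card) := by
            rw [Real.log_div (by positivity) hc.ne', Real.log_div (by positivity) h3.ne',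
              Real.log_mul (by positivity) h2.ne', Real.log_mul h4.ne' h1.ne', Real.log_exp]
          rw [e]
          exact Real.log_le_sub_one_of_pos (by positivity)
      _ = (∑ x ∈ s, Real.exp (h (f x) (g x)) * fiberCard s f x * fiberCard s g x /
            fiberCard s (fun x => (f x, g x)) x) / s.card - s.card := by
          rw [Finset.sum_sub_distrib, Finset.sum_div]; simp
      _ ≤ _ := by
          gcongr ?_ / _ - _
          exact sum_joint_le s f g (fun a b => Real.exp (h a b)) fun a b => (Real.exp_pos _).le
  rw [entropy_const]
  unfold entropy
  simp only [Finset.sum_add_distrib, Finset.sum_sub_distrib, Finset.sum_const, nsmul_eq_mul] at key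
  linarith

theorem entropy_pair_add_const_le (s : Finset Ω) (f : Ω → α) (g : Ω → β) :
    entropy s (fun x => (f x, g x)) + entropy s (fun _ => ()) ≤ entropy s f + entropy s g := by
  have h := sum_le_info s f g (fun _ _ => 0)
  rcases s.eq_empty_or_nonempty with rfl | hs
  · simp [entropy]
  have hc : (0 : ℝ) < s.card := by exact_mod_cast Finset.card_pos.2 hs
  simp only [Finset.sum_const_zero, Real.exp_zero, Finset.sum_const, nsmul_eq_mul, mul_one] at h
  rw [mul_div_assoc, div_self hc.ne', mul_one] at h
  linarith

/-- Submodularity of entropy. -/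
theorem entropy_submodular (s : Finset Ω) (f : Ω → α) (g : Ω → β) (A : Ω → γ) :
    entropy s (fun x => ((f x, g x), A x)) + entropy s A ≤
      entropy s (fun x => (f x, A x)) + entropy s (fun x => (g x, A x)) := by
  rw [entropy_pair_eq_sum, entropy_pair_eq_sum, entropy_pair_eq_sum, entropy_eq_sum_const s A,
    ← Finset.sum_add_distrib, ← Finset.sum_add_distrib]
  exact Finset.sum_le_sum fun a _ => entropy_pair_add_const_le _ f g

end Entropy

section Block
open scoped Classical

variable {Ω α β γ δ : Type*}

theorem sum_half_pow_natAbs_le (u : Finset ℤ) (n : ℤ) :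
    ∑ b ∈ u, (1 / 2 : ℝ) ^ (b - n).natAbs ≤ 4 := by
  have key : ∀ v : Finset ℤ, Set.InjOn (fun b : ℤ => (b - n).natAbs) v →
      ∑ b ∈ v, (1 / 2 : ℝ) ^ (b - n).natAbs ≤ 2 := by
    intro v hv
    rw [← Finset.sum_image (s := v) (g := fun b : ℤ => (b - n).natAbs)
      (f := fun k : ℕ => (1 / 2 : ℝ) ^ k) hv]
    refine (Summable.sum_le_tsum _ (fun k _ => by positivity) summable_geometric_two).trans ?_
    rw [tsum_geometric_two]
  rw [← Finset.sum_filter_add_sum_filter_not u (fun b => n ≤ b)]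
  have h1 := key (u.filter fun b => n ≤ b) (by
    intro a ha b hb hab
    simp at ha hb hab
    omega)
  have h2 := key (u.filter fun b => ¬ n ≤ b) (by
    intro a ha b hb hab
    simp at ha hb hab
    omega)
  linarith

theorem exists_center_sum_le_info (t : Finset Ω) (y : Ω → β) (X : Ω → α) (x : Ω → ℝ) {L R : ℝ}
    (hR : 1 ≤ R) (hL : ∀ p ∈ t, ∀ q ∈ t, X p = X q → |x p - x q| ≤ L)
    (hxR : ∀ p ∈ t, ∀ q ∈ t, |x p - x q| ≤ R) :
    ∃ μ : ℝ, ∀ σ : β → ℝ, (∀ b, |σ b| ≤ 1) →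
      ∑ p ∈ t, σ (y p) * (x p - μ) ≤ t.card * (1 + L) + R ^ 2 *
        (entropy t X + entropy t y - entropy t (fun p => (X p, y p)) -
          entropy t (fun _ => ())) := by
  rcases t.eq_empty_or_nonempty with rfl | ht
  · exact ⟨0, fun σ _ => by simp [entropy]⟩
  have hc : (0 : ℝ) < t.card := by exact_mod_cast Finset.card_pos.2 ht
  have hrep : ∀ a : α, ∃ v : ℝ, ∀ p ∈ t, X p = a → ∃ q ∈ t, X q = a ∧ v = x q := by
    intro a
    by_cases h : ∃ q ∈ t, X q = a
    · obtain ⟨q, hq, hqa⟩ := h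
      exact ⟨x q, fun p _ _ => ⟨q, hq, hqa, rfl⟩⟩
    · exact ⟨0, fun p hp hpa => (h ⟨p, hp, hpa⟩).elim⟩
  choose rep hrep using hrep
  have hrepL : ∀ p ∈ t, |x p - rep (X p)| ≤ L := by
    intro p hp
    obtain ⟨q, hq, hqX, he⟩ := hrep (X p) p hp rfl
    rw [he]
    exact hL p hp q hq hqX.symm
  set μ : ℝ := (∑ p ∈ t, rep (X p)) / t.card with hμ
  have hzero : ∑ p ∈ t, (rep (X p) - μ) = 0 := by
    rw [Finset.sum_sub_distrib, hμ, Finset.sum_const, nsmul_eq_mul]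
    field_simp
    ring
  have hdev : ∀ p ∈ t, |rep (X p) - μ| ≤ R := by
    intro p hp
    have e : rep (X p) - μ = (∑ q ∈ t, (rep (X p) - rep (X q))) / t.card := by
      rw [Finset.sum_sub_distrib, hμ, Finset.sum_const, nsmul_eq_mul]
      field_simp
    rw [e, abs_div, abs_of_pos hc, div_le_iff₀ hc]
    refine (Finset.abs_sum_le_sum_abs _ _).trans ?_
    refine (Finset.sum_le_card_nsmul t _ R fun q hq => ?_).trans (by rw [nsmul_eq_mul, mul_comm])
    obtain ⟨p', hp', -, e1⟩ := hrep (X p) p hp rfl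
    obtain ⟨q', hq', -, e2⟩ := hrep (X q) q hq rfl
    rw [e1, e2]
    exact hxR p' hp' q' hq'
  refine ⟨μ, fun σ hσ => ?_⟩
  have hRpos : 0 < R := by linarith
  set h : α → β → ℝ := fun a b => σ b * (rep a - μ) / R ^ 2 with hh
  have habs : ∀ p ∈ t, ∀ q : Ω, |h (X p) (y q)| ≤ 1 / R := by
    intro p hp q
    simp only [hh]
    rw [abs_div, abs_mul, abs_of_pos (by positivity : 0 < R ^ 2),
      div_le_div_iff₀ (by positivity) hRpos]
    have := mul_le_mul (hσ (y q)) (hdev p hp) (abs_nonneg _) zero_le_one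
    nlinarith
  have hexp : ∀ p ∈ t, ∀ q ∈ t, Real.exp (h (X p) (y q)) ≤ 1 + h (X p) (y q) + 1 / R ^ 2 := by
    intro p hp q _
    have h1 := habs p hp q
    have h2 : |h (X p) (y q)| ≤ 1 := h1.trans (by rw [div_le_one hRpos]; exact hR)
    have h3 := (abs_le.1 (Real.abs_exp_sub_one_sub_id_le h2)).2
    have h4 : h (X p) (y q) ^ 2 ≤ 1 / R ^ 2 := by
      rw [← sq_abs, ← one_div_pow]
      exact pow_le_pow_left₀ (abs_nonneg _) h1 2
    linarith
  have hsum : ∑ p ∈ t, ∑ q ∈ t, Real.exp (h (X p) (y q)) ≤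
      (t.card : ℝ) * t.card * (1 + 1 / R ^ 2) := by
    calc _ ≤ ∑ p ∈ t, ∑ q ∈ t, (1 + h (X p) (y q) + 1 / R ^ 2) :=
          Finset.sum_le_sum fun p hp => Finset.sum_le_sum fun q hq => hexp p hp q hq
      _ = ∑ p ∈ t, ∑ q ∈ t, (1 + 1 / R ^ 2) + ∑ p ∈ t, ∑ q ∈ t, h (X p) (y q) := by
          rw [← Finset.sum_add_distrib]
          refine Finset.sum_congr rfl fun p _ => ?_
          rw [← Finset.sum_add_distrib]
          exact Finset.sum_congr rfl fun q _ => by ring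
      _ = (t.card : ℝ) * t.card * (1 + 1 / R ^ 2) + 0 := by
          congr 1
          · simp only [Finset.sum_const, nsmul_eq_mul]
            ring
          · rw [Finset.sum_comm]
            refine Finset.sum_eq_zero fun q _ => ?_
            simp only [hh]
            rw [← Finset.sum_div, ← Finset.mul_sum, hzero]
            simp
      _ = _ := by ring
  have hdv := sum_le_info t X y h
  have hdiv : (∑ p ∈ t, ∑ q ∈ t, Real.exp (h (X p) (y q))) / t.card - t.card ≤ t.card / R ^ 2 := by
    rw [sub_le_iff_le_add, div_le_iff₀ hc]
    refine hsum.trans (le_of_eq ?_)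
    ring
  have hmul : ∑ p ∈ t, σ (y p) * (rep (X p) - μ) = R ^ 2 * ∑ p ∈ t, h (X p) (y p) := by
    rw [Finset.mul_sum]
    refine Finset.sum_congr rfl fun p _ => ?_
    simp only [hh]
    field_simp
  have hlast : ∑ p ∈ t, σ (y p) * (x p - μ) ≤
      ∑ p ∈ t, (σ (y p) * (rep (X p) - μ) + L) := by
    refine Finset.sum_le_sum fun p hp => ?_
    have h1 := mul_le_mul (hσ (y p)) (hrepL p hp) (abs_nonneg _) zero_le_one
    rw [← abs_mul] at h1
    have := le_abs_self (σ (y p) * (x p - rep (X p)))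
    nlinarith
  rw [Finset.sum_add_distrib, hmul, Finset.sum_const, nsmul_eq_mul] at hlast
  have h5 := mul_le_mul_of_nonneg_left (hdv.trans (add_le_add_right hdiv _))
    (by positivity : 0 ≤ R ^ 2)
  have h6 : R ^ 2 * (t.card / R ^ 2) = (t.card : ℝ) := by field_simp
  rw [mul_add, h6] at h5
  linarith

/-- If `y` is up to `1` the difference of `x1` and `x0`, and `xₑ` is up to `L` a function of `Xₑ`,
then the entropy of `y` is controlled by its mutual information with `X0` and `X1`. -/
theorem entropy_sub_const_le_of_difference (t : Finset Ω) (y : Ω → ℤ) (X0 : Ω → α) (X1 : Ω → β)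
    (x0 x1 : Ω → ℝ) {L R : ℝ} (hR : 1 ≤ R) (hy : ∀ p ∈ t, |x1 p - x0 p - y p| ≤ 1)
    (hL0 : ∀ p ∈ t, ∀ q ∈ t, X0 p = X0 q → |x0 p - x0 q| ≤ L)
    (hL1 : ∀ p ∈ t, ∀ q ∈ t, X1 p = X1 q → |x1 p - x1 q| ≤ L)
    (hR0 : ∀ p ∈ t, ∀ q ∈ t, |x0 p - x0 q| ≤ R) (hR1 : ∀ p ∈ t, ∀ q ∈ t, |x1 p - x1 q| ≤ R) :
    entropy t y - entropy t (fun _ => ()) ≤ Real.log 2 * (t.card * (6 + 2 * L) + R ^ 2 *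
      ((entropy t X0 + entropy t y - entropy t (fun p => (X0 p, y p)) - entropy t (fun _ => ())) +
       (entropy t X1 + entropy t y - entropy t (fun p => (X1 p, y p)) -
          entropy t (fun _ => ())))) := by
  obtain ⟨μ0, h0⟩ := exists_center_sum_le_info t y X0 x0 hR hL0 hR0
  obtain ⟨μ1, h1⟩ := exists_center_sum_le_info t y X1 x1 hR hL1 hR1
  set c : ℝ := μ1 - μ0 with hc
  set σ : ℤ → ℝ := fun b => if c ≤ b then 1 else -1 with hσ
  have hσ1 : ∀ b, |σ b| ≤ 1 := fun b => by simp only [hσ]; split_ifs <;> simp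
  have hσc : ∀ b : ℤ, σ b * (b - c) = |(b : ℝ) - c| := fun b => by
    simp only [hσ]
    split_ifs with h
    · rw [abs_of_nonneg (by linarith)]; ring
    · rw [abs_of_neg (by push Not at h; linarith)]; ring
  have h0' := h0 (fun b => -σ b) (fun b => by rw [abs_neg]; exact hσ1 b)
  have h1' := h1 σ hσ1
  have hsum : ∑ p ∈ t, |(y p : ℝ) - c| ≤
      ∑ p ∈ t, (σ (y p) * (x1 p - μ1) + -σ (y p) * (x0 p - μ0) + 1) := by
    refine Finset.sum_le_sum fun p hp => ?_
    have e := mul_le_mul (hσ1 (y p)) (hy p hp) (abs_nonneg _) zero_le_one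
    rw [← abs_mul] at e
    have := neg_abs_le (σ (y p) * (x1 p - x0 p - y p))
    rw [← hσc]
    nlinarith
  rw [Finset.sum_add_distrib, Finset.sum_add_distrib, Finset.sum_const, nsmul_eq_mul] at hsum
  have hl : 0 < Real.log 2 := Real.log_pos one_lt_two
  have hG := entropy_sub_const_le t y (fun b => 1 / 4 * (1 / 2 : ℝ) ^ (b - ⌊c⌋).natAbs)
    (fun b => by positivity) (by
      rw [← Finset.mul_sum]
      exact (mul_le_mul_of_nonneg_left (sum_half_pow_natAbs_le _ ⌊c⌋) (by norm_num)).trans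
        (by norm_num))
  have hG2 : ∑ p ∈ t, -Real.log (1 / 4 * (1 / 2 : ℝ) ^ (y p - ⌊c⌋).natAbs) ≤
      ∑ p ∈ t, Real.log 2 * (3 + |(y p : ℝ) - c|) := by
    refine Finset.sum_le_sum fun p _ => ?_
    rw [Real.log_mul (by norm_num) (by positivity), Real.log_pow]
    have e4 : Real.log (1 / 4) = -(2 * Real.log 2) := by
      rw [one_div, Real.log_inv, show (4 : ℝ) = 2 ^ 2 by norm_num, Real.log_pow]; simp
    have e2 : Real.log (1 / 2) = -Real.log 2 := by rw [one_div, Real.log_inv]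
    rw [e4, e2]
    have hn : ((y p - ⌊c⌋).natAbs : ℝ) ≤ |(y p : ℝ) - c| + 1 := by
      rw [Nat.cast_natAbs]
      push_cast
      have h1 := Int.floor_le c
      have h2 := Int.lt_floor_add_one c
      calc |(y p : ℝ) - ⌊c⌋| = |((y p : ℝ) - c) + (c - ⌊c⌋)| := by ring_nf
        _ ≤ |(y p : ℝ) - c| + |c - ⌊c⌋| := abs_add_le _ _
        _ ≤ _ := by
          gcongr
          rw [abs_of_nonneg (by linarith)]
          linarith
    nlinarith
  rw [← Finset.mul_sum, Finset.sum_add_distrib, Finset.sum_const, nsmul_eq_mul] at hG2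
  refine hG.trans (hG2.trans (mul_le_mul_of_nonneg_left ?_ hl.le))
  linarith

/-- Conditional version of `entropy_sub_const_le_of_difference`. -/
theorem entropy_cond_le_of_difference (s : Finset Ω) (y : Ω → ℤ) (X0 : Ω → α) (X1 : Ω → β)
    (A : Ω → γ) (x0 x1 : Ω → ℝ) {L R : ℝ} (hR : 1 ≤ R) (hy : ∀ p ∈ s, |x1 p - x0 p - y p| ≤ 1)
    (hL0 : ∀ p ∈ s, ∀ q ∈ s, X0 p = X0 q → |x0 p - x0 q| ≤ L)
    (hL1 : ∀ p ∈ s, ∀ q ∈ s, X1 p = X1 q → |x1 p - x1 q| ≤ L)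
    (hR0 : ∀ p ∈ s, ∀ q ∈ s, A p = A q → |x0 p - x0 q| ≤ R)
    (hR1 : ∀ p ∈ s, ∀ q ∈ s, A p = A q → |x1 p - x1 q| ≤ R) :
    entropy s (fun p => (y p, A p)) - entropy s A ≤ Real.log 2 * (s.card * (6 + 2 * L) + R ^ 2 *
      ((entropy s (fun p => (X0 p, A p)) + entropy s (fun p => (y p, A p)) -
          entropy s (fun p => ((X0 p, y p), A p)) - entropy s A) +
       (entropy s (fun p => (X1 p, A p)) + entropy s (fun p => (y p, A p)) -
          entropy s (fun p => ((X1 p, y p), A p)) - entropy s A))) := by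
  simp only [entropy_pair_eq_sum s _ A]
  rw [entropy_eq_sum_const s A, card_eq_sum_filter s A]
  simp only [← Finset.sum_add_distrib, ← Finset.sum_sub_distrib, Finset.sum_mul, Finset.mul_sum]
  refine Finset.sum_le_sum fun a _ => ?_
  refine entropy_sub_const_le_of_difference _ y X0 X1 x0 x1 hR ?_ ?_ ?_ ?_ ?_
  · exact fun p hp => hy p (Finset.mem_filter.1 hp).1
  · exact fun p hp q hq => hL0 p (Finset.mem_filter.1 hp).1 q (Finset.mem_filter.1 hq).1
  · exact fun p hp q hq => hL1 p (Finset.mem_filter.1 hp).1 q (Finset.mem_filter.1 hq).1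
  · intro p hp q hq
    rw [Finset.mem_filter] at hp hq
    exact hR0 p hp.1 q hq.1 (hp.2.trans hq.2.symm)
  · intro p hp q hq
    rw [Finset.mem_filter] at hp hq
    exact hR1 p hp.1 q hq.1 (hp.2.trans hq.2.symm)

end Block

section Cover
open scoped Classical

/-- `E` has at most `C (R / r) ^ α` pieces of diameter `r` in each ball of radius `R`. -/
def CoverBound (E : Set ℝ) (α C : ℝ) : Prop :=
  ∀ x ∈ E, ∀ r R : ℝ, 0 < r → r < R → ∃ 𝒰 : Finset (Set ℝ), (E ∩ closedBall x R ⊆ ⋃ U ∈ 𝒰, U) ∧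
    (∀ U ∈ 𝒰, ∀ a ∈ U, ∀ b ∈ U, |a - b| ≤ r) ∧ ((𝒰.card : ℝ) ≤ C * (R / r) ^ α)

theorem ediam_le_ofReal_iff {U : Set ℝ} {r : ℝ} (hr : 0 < r) :
    ediam U ≤ ENNReal.ofReal r ↔ ∀ a ∈ U, ∀ b ∈ U, |a - b| ≤ r := by
  rw [ediam_le_iff]
  refine forall₄_congr fun a _ b _ => ?_
  rw [edist_dist, Real.dist_eq, ENNReal.ofReal_le_ofReal_iff hr.le]

theorem assouadDim_eq (E : Set ℝ) :
    assouadDim E = sInf {α : ℝ | 0 ≤ α ∧ ∃ C : ℝ, 0 < C ∧ CoverBound E α C} := by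
  unfold assouadDim CoverBound
  congr 1
  ext α
  refine and_congr_right fun _ => exists_congr fun C => and_congr_right fun _ => ?_
  refine forall₅_congr fun x _ r R hr => forall_congr' fun _ => exists_congr fun 𝒰 => ?_
  refine and_congr_right fun _ => and_congr_left fun _ => forall₂_congr fun U _ => ?_
  exact ediam_le_ofReal_iff hr

theorem CoverBound.mono {E : Set ℝ} {α β C : ℝ} (h : CoverBound E α C) (hC : 0 ≤ C)
    (hαβ : α ≤ β) : CoverBound E β C := by
  intro x hx r R hr hrR
  obtain ⟨𝒰, h1, h2, h3⟩ := h x hx r R hr hrR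
  refine ⟨𝒰, h1, h2, h3.trans ?_⟩
  gcongr
  rw [le_div_iff₀ hr]
  linarith

theorem coverBound_one (E : Set ℝ) : CoverBound E 1 4 := by
  intro x _ r R hr hrR
  refine ⟨(Finset.Icc ⌊(x - R) / r⌋ ⌊(x + R) / r⌋).image fun k : ℤ => Icc (k * r) ((k + 1) * r),
    ?_, ?_, ?_⟩
  · rintro y ⟨-, hy⟩
    rw [mem_closedBall, Real.dist_eq, abs_le] at hy
    simp only [Finset.mem_image, mem_iUnion]
    refine ⟨_, ⟨⌊y / r⌋, ?_, rfl⟩, ?_⟩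
    · rw [Finset.mem_Icc]
      constructor <;> refine Int.floor_le_floor ?_ <;> gcongr <;> linarith
    · rw [mem_Icc]
      constructor
      · rw [← le_div_iff₀ hr]; exact Int.floor_le _
      · rw [← div_le_iff₀ hr]; exact (Int.lt_floor_add_one _).le
  · intro U hU a ha b hb
    obtain ⟨k, -, rfl⟩ := Finset.mem_image.1 hU
    rw [mem_Icc] at ha hb
    rw [abs_le]
    constructor <;> nlinarith
  · refine (Nat.cast_le.2 Finset.card_image_le).trans ?_
    rw [Int.card_Icc, Real.rpow_one]
    have hle : ⌊(x - R) / r⌋ ≤ ⌊(x + R) / r⌋ := by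
      refine Int.floor_le_floor ?_; gcongr; linarith
    have h0 : (0 : ℤ) ≤ ⌊(x + R) / r⌋ + 1 - ⌊(x - R) / r⌋ := by omega
    have e : (((⌊(x + R) / r⌋ + 1 - ⌊(x - R) / r⌋).toNat : ℕ) : ℝ) =
        (⌊(x + R) / r⌋ : ℝ) + 1 - ⌊(x - R) / r⌋ := by
      have := Int.toNat_of_nonneg h0
      have h2 : (((⌊(x + R) / r⌋ + 1 - ⌊(x - R) / r⌋).toNat : ℤ) : ℝ) =
        ((⌊(x + R) / r⌋ + 1 - ⌊(x - R) / r⌋ : ℤ) : ℝ) := by rw [this]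
      push_cast at h2
      exact h2
    rw [e]
    have h1 := Int.floor_le ((x + R) / r)
    have h2 := Int.lt_floor_add_one ((x - R) / r)
    have h3 : (x + R) / r - (x - R) / r = 2 * (R / r) := by ring
    have h4 : 1 ≤ R / r := by rw [le_div_iff₀ hr]; linarith
    linarith

theorem exists_coverBound_of_assouadDim_lt {E : Set ℝ} {α : ℝ} (h : assouadDim E < α) :
    ∃ C : ℝ, 0 < C ∧ CoverBound E α C := by
  rw [assouadDim_eq] at h
  have hne : {α : ℝ | 0 ≤ α ∧ ∃ C : ℝ, 0 < C ∧ CoverBound E α C}.Nonempty :=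
    ⟨1, zero_le_one, 4, by norm_num, coverBound_one E⟩
  obtain ⟨β, ⟨_, C, hC, hb⟩, hlt⟩ := exists_lt_of_csInf_lt hne h
  exact ⟨C, hC, hb.mono hC.le hlt.le⟩

theorem not_coverBound_of_lt_assouadDim {E : Set ℝ} {α : ℝ} (h0 : 0 ≤ α) (h : α < assouadDim E)
    {C : ℝ} (hC : 0 < C) : ¬ CoverBound E α C := by
  rw [assouadDim_eq] at h
  intro hb
  have hbdd : BddBelow {α : ℝ | 0 ≤ α ∧ ∃ C : ℝ, 0 < C ∧ CoverBound E α C} :=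
    ⟨0, fun β hβ => hβ.1⟩
  exact absurd (csInf_le hbdd ⟨h0, C, hC, hb⟩) (not_le.2 h)

theorem assouadDim_nonneg (E : Set ℝ) : 0 ≤ assouadDim E := by
  rw [assouadDim_eq]
  exact Real.sInf_nonneg fun β hβ => hβ.1

/-- The index of the dyadic interval of level `i` containing `x`. -/
def dyadic (i : ℤ) (x : ℝ) : ℤ := ⌊x * (2 : ℝ) ^ i⌋

theorem dyadic_eq_ediv (i : ℤ) (n : ℕ) (x : ℝ) :
    dyadic i x = dyadic (i + n) x / ((2 ^ n : ℕ) : ℤ) := by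
  unfold dyadic
  rw [← Int.floor_div_natCast, zpow_add₀ two_ne_zero, zpow_natCast]
  congr 1
  push_cast
  field_simp

theorem dyadic_nested {i i' : ℤ} (h : i ≤ i') {x y : ℝ} (hxy : dyadic i' x = dyadic i' y) :
    dyadic i x = dyadic i y := by
  obtain ⟨n, rfl⟩ : ∃ n : ℕ, i' = i + n := ⟨(i' - i).toNat, by omega⟩
  rw [dyadic_eq_ediv i n x, dyadic_eq_ediv i n y, hxy]

theorem abs_sub_le_of_dyadic_eq {i : ℤ} {x y : ℝ} (h : dyadic i x = dyadic i y) :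
    |x - y| ≤ (2 : ℝ) ^ (-i) := by
  have h2 : (0 : ℝ) < 2 ^ i := by positivity
  have := (Int.abs_sub_lt_one_of_floor_eq_floor h).le
  rw [← sub_mul, abs_mul, abs_of_pos h2] at this
  rwa [zpow_neg, ← one_div, le_div_iff₀ h2]

theorem dyadic_mem_Icc_of_abs_sub_le {i : ℤ} {x y : ℝ} (h : |x - y| ≤ (2 : ℝ) ^ (-i)) :
    dyadic i y ∈ Finset.Icc (dyadic i x - 1) (dyadic i x + 1) := by
  have h2 : (0 : ℝ) < 2 ^ i := by positivity
  rw [zpow_neg, ← one_div, le_div_iff₀ h2, ← abs_of_pos h2, ← abs_mul, sub_mul,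
    abs_le] at h
  unfold dyadic
  rw [Finset.mem_Icc]
  have e1 : ⌊x * 2 ^ i⌋ - 1 = ⌊x * 2 ^ i - 1⌋ := by simp
  have e2 : ⌊x * 2 ^ i⌋ + 1 = ⌊x * 2 ^ i + 1⌋ := by simp
  rw [e1, e2]
  constructor <;> apply Int.floor_le_floor <;> linarith

theorem card_image_dyadic_le {ι : Type*} (T : Finset ι) (f : ι → ℝ) (i : ℤ) (n : ℕ)
    (h : ∀ x ∈ T, ∀ y ∈ T, dyadic i (f x) = dyadic i (f y)) :
    ((T.image fun x => dyadic (i + n) (f x)).card : ℝ) ≤ 2 ^ n := by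
  rcases T.eq_empty_or_nonempty with rfl | ⟨x0, hx0⟩
  · simp
  have : (T.image fun x => dyadic (i + n) (f x)) ⊆
      Finset.Ico ((2 ^ n : ℕ) * dyadic i (f x0)) ((2 ^ n : ℕ) * dyadic i (f x0) + (2 ^ n : ℕ)) := by
    intro k hk
    obtain ⟨x, hx, rfl⟩ := Finset.mem_image.1 hk
    rw [← h x hx x0 hx0, dyadic_eq_ediv i n (f x), Finset.mem_Ico]
    have hp : (0 : ℤ) < (2 ^ n : ℕ) := by positivity
    have h1 := Int.mul_ediv_add_emod (dyadic (i + n) (f x)) ((2 ^ n : ℕ) : ℤ)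
    have h2 := Int.emod_nonneg (dyadic (i + n) (f x)) hp.ne'
    have h3 := Int.emod_lt_of_pos (dyadic (i + n) (f x)) hp
    constructor <;> linarith
  have h2 := Finset.card_le_card this
  rw [Int.card_Ico] at h2
  simp at h2
  exact_mod_cast h2

end Cover

section Cells
open scoped Classical

theorem card_image_le_mul_of_cover {ι κ υ : Type*} [DecidableEq κ] (T : Finset ι) (g : ι → κ) (𝒰 : Finset υ)
    (m : ι → υ → Prop) (hcov : ∀ x ∈ T, ∃ U ∈ 𝒰, m x U) (k : ℝ)
    (hk : ∀ U ∈ 𝒰, (((T.filter fun x => m x U).image g).card : ℝ) ≤ k) :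
    ((T.image g).card : ℝ) ≤ 𝒰.card * k := by
  have hsub : T.image g ⊆ 𝒰.biUnion fun U => (T.filter fun x => m x U).image g := by
    intro b hb
    obtain ⟨x, hx, rfl⟩ := Finset.mem_image.1 hb
    obtain ⟨U, hU, hm⟩ := hcov x hx
    exact Finset.mem_biUnion.2 ⟨U, hU, Finset.mem_image_of_mem _ (by simp [hx, hm])⟩
  calc ((T.image g).card : ℝ) ≤ ∑ U ∈ 𝒰, (((T.filter fun x => m x U).image g).card : ℝ) := by
        exact_mod_cast (Finset.card_le_card hsub).trans Finset.card_biUnion_le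
    _ ≤ ∑ U ∈ 𝒰, k := Finset.sum_le_sum hk
    _ = _ := by rw [Finset.sum_const, nsmul_eq_mul]

theorem card_image_dyadic_le_three {ι : Type*} (T : Finset ι) (f : ι → ℝ) (i : ℤ)
    (h : ∀ x ∈ T, ∀ y ∈ T, |f x - f y| ≤ (2 : ℝ) ^ (-i)) :
    ((T.image fun x => dyadic i (f x)).card : ℝ) ≤ 3 := by
  rcases T.eq_empty_or_nonempty with rfl | ⟨x0, hx0⟩
  · simp
  have hsub : (T.image fun x => dyadic i (f x)) ⊆
      Finset.Icc (dyadic i (f x0) - 1) (dyadic i (f x0) + 1) := by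
    intro b hb
    obtain ⟨x, hx, rfl⟩ := Finset.mem_image.1 hb
    exact dyadic_mem_Icc_of_abs_sub_le (h x0 hx0 x hx)
  have := Finset.card_le_card hsub
  rw [Int.card_Icc] at this
  have h3 : (dyadic i (f x0) + 1 + 1 - (dyadic i (f x0) - 1)).toNat = 3 := by omega
  rw [h3] at this
  exact_mod_cast this

theorem card_image_dyadic_le_of_coverBound {F : Set ℝ} {s C : ℝ} (h : CoverBound F s C)
    {ι : Type*} (T : Finset ι) (f : ι → ℝ) (hf : ∀ x ∈ T, f x ∈ F) (i : ℤ) (n : ℕ) (hC : 0 < C)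
    (hT : ∀ x ∈ T, ∀ y ∈ T, dyadic i (f x) = dyadic i (f y)) :
    ((T.image fun x => dyadic (i + n) (f x)).card : ℝ) ≤ 3 * C * 2 ^ s * 2 ^ (s * n) := by
  rcases T.eq_empty_or_nonempty with rfl | ⟨x0, hx0⟩
  · simp; positivity
  have h2 : (0 : ℝ) < 2 ^ (-i) := by positivity
  have hr : (2 : ℝ) ^ (-(i + n : ℤ)) = 2 ^ (-i) / 2 ^ n := by
    rw [neg_add, zpow_add₀ two_ne_zero, zpow_neg _ (n : ℤ), zpow_natCast]; rfl
  have hle : (2 : ℝ) ^ (-i) / 2 ^ n ≤ 2 ^ (-i) :=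
    div_le_self h2.le (one_le_pow₀ one_le_two)
  obtain ⟨𝒰, h1, h3, h4⟩ := h (f x0) (hf x0 hx0) (2 ^ (-(i + n : ℤ))) (2 * 2 ^ (-i))
    (by positivity) (by rw [hr]; linarith)
  have hq : 2 * (2 : ℝ) ^ (-i) / 2 ^ (-(i + n : ℤ)) = 2 * 2 ^ n := by rw [hr]; field_simp
  rw [hq, Real.mul_rpow two_pos.le (by positivity), ← Real.rpow_natCast, ← Real.rpow_mul two_pos.le,
    mul_comm (n : ℝ)] at h4
  refine (card_image_le_mul_of_cover T _ 𝒰 (fun x U => f x ∈ U) ?_ 3 ?_).trans ?_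
  · intro x hx
    have := h1 ⟨hf x hx, by
      rw [mem_closedBall, Real.dist_eq]
      linarith [abs_sub_le_of_dyadic_eq (hT x hx x0 hx0)]⟩
    simpa using this
  · intro U hU
    refine card_image_dyadic_le_three _ f (i + n) fun x hx y hy => ?_
    exact h3 U hU _ (Finset.mem_filter.1 hx).2 _ (Finset.mem_filter.1 hy).2
  · calc (𝒰.card : ℝ) * 3 ≤ (C * (2 ^ s * 2 ^ (s * n))) * 3 := by gcongr
      _ = _ := by ring

theorem exists_regular_of_lt_assouadDim {F : Set ℝ} {s : ℝ} (hs0 : 0 ≤ s) (hs : s < assouadDim F)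
    {n : ℕ} (hn : 1 ≤ n) : ∃ (i : ℤ) (T : Finset ℝ), ↑T ⊆ F ∧
      (∀ x ∈ T, ∀ y ∈ T, dyadic i x = dyadic i y) ∧ InjOn (dyadic (i + n)) T ∧
      (2 : ℝ) ^ (s * n) ≤ T.card := by
  by_contra! H
  set ρ : ℝ := 2 ^ (s * n) with hρ
  have hρ0 : 0 < ρ := by positivity
  have hone : ∀ (i : ℤ) (T : Finset ℝ), ↑T ⊆ F → (∀ x ∈ T, ∀ y ∈ T, dyadic i x = dyadic i y) →
      ((T.image (dyadic (i + n))).card : ℝ) ≤ ρ := by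
    intro i T hT hi
    obtain ⟨u, hu, hinj, himg⟩ := Finset.exists_subset_injOn_image_eq_of_surjOn (T : Set ℝ)
      (T.image (dyadic (i + n))) (f := dyadic (i + n)) (by
        intro b hb; simpa using hb)
    have hi' : ∀ x ∈ u, ∀ y ∈ u, dyadic i x = dyadic i y :=
      fun x hx y hy => hi x (hu hx) y (hu hy)
    have := H i u (hu.trans hT) hi' hinj
    rw [← himg, Finset.card_image_of_injOn hinj]
    exact this.le
  have hiter : ∀ (k : ℕ) (i : ℤ) (T : Finset ℝ), ↑T ⊆ F →
      (∀ x ∈ T, ∀ y ∈ T, dyadic i x = dyadic i y) →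
      ((T.image (dyadic (i + (k * n : ℕ)))).card : ℝ) ≤ ρ ^ k := by
    intro k
    induction k with
    | zero =>
      intro i T _ hi
      have : (T.image (dyadic i)).card ≤ 1 := by
        rw [Finset.card_le_one]
        simp only [Finset.mem_image]
        rintro _ ⟨x, hx, rfl⟩ _ ⟨y, hy, rfl⟩
        exact hi x hx y hy
      simpa using this
    | succ k ih =>
      intro i T hT hi
      have e : i + ((k + 1) * n : ℕ) = (i + n) + (k * n : ℕ) := by push_cast; ring
      rw [e]
      refine (card_image_le_mul_of_cover T _ (T.image (dyadic (i + n)))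
        (fun x b => dyadic (i + n) x = b)
        (fun x hx => ⟨_, Finset.mem_image_of_mem _ hx, rfl⟩) (ρ ^ k) ?_).trans ?_
      · intro b _
        refine ih (i + n) _ (fun x hx => hT ?_) ?_
        · simp at hx; exact hx.1
        · intro x hx y hy
          simp only [Finset.mem_filter] at hx hy
          rw [hx.2, hy.2]
      · rw [pow_succ, mul_comm]
        gcongr
        exact hone i T hT hi
  refine not_coverBound_of_lt_assouadDim hs0 hs (C := 3 * (2 ^ (n + 1)) ^ s) (by positivity) ?_
  intro x hx r R hr hrR
  have hR : 0 < R := hr.trans hrR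
  obtain ⟨p, hp1, hp2⟩ := exists_mem_Ioc_zpow hR one_lt_two
  set i : ℤ := -(p + 1) with hi
  have hRi : R ≤ 2 ^ (-i) := by simpa [hi] using hp2
  have hiR : (2 : ℝ) ^ (-i) < 2 * R := by
    rw [hi, neg_neg, zpow_add_one₀ two_ne_zero]; linarith
  have hzp : ∀ k : ℕ, (2 : ℝ) ^ (-(i + (k * n : ℕ))) = 2 ^ (-i) / (2 ^ n) ^ k := by
    intro k
    rw [neg_add, zpow_add₀ two_ne_zero, zpow_neg _ ((k * n : ℕ) : ℤ), zpow_natCast, ← pow_mul,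
      mul_comm n k]; rfl
  have hbase : (1 : ℝ) < 2 ^ n := one_lt_pow₀ one_lt_two (by omega)
  have hpow : ∀ k : ℕ, ρ ^ k = (((2 : ℝ) ^ n) ^ k) ^ s := by
    intro k
    rw [hρ, mul_comm s, Real.rpow_mul two_pos.le, Real.rpow_natCast]
    exact Real.rpow_pow_comm (by positivity) s k
  have hex : ∃ k : ℕ, (2 : ℝ) ^ (-(i + (k * n : ℕ))) ≤ r := by
    obtain ⟨k, hk⟩ := pow_unbounded_of_one_lt ((2 : ℝ) ^ (-i) / r) hbase
    refine ⟨k, ?_⟩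
    rw [hzp, div_le_iff₀ (by positivity)]
    rw [div_lt_iff₀ hr] at hk
    linarith
  obtain ⟨k, hk, hkmin⟩ : ∃ k : ℕ, (2 : ℝ) ^ (-(i + (k * n : ℕ))) ≤ r ∧
      ((2 : ℝ) ^ n) ^ k ≤ 2 ^ (n + 1) * (R / r) := by
    have hfind := Nat.find_spec hex
    refine ⟨Nat.find hex, hfind, ?_⟩
    obtain ⟨k', hk'⟩ : ∃ k', Nat.find hex = k' + 1 := by
      refine Nat.exists_eq_succ_of_ne_zero fun h0 => ?_
      rw [h0] at hfind
      simp at hfind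
      rw [← zpow_neg] at hfind
      linarith
    have hmin := Nat.find_min hex (m := k') (by omega)
    rw [hzp, not_le, lt_div_iff₀ (by positivity)] at hmin
    rw [hk', ← mul_div_assoc, le_div_iff₀ hr, pow_succ, pow_succ (2 : ℝ) n]
    have h2n : (0 : ℝ) < 2 ^ n := by positivity
    nlinarith
  set lv : ℤ := i + (k * n : ℕ) with hlv
  have hmem : ∀ y ∈ F ∩ closedBall x R, |x - y| ≤ (2 : ℝ) ^ (-i) := by
    rintro y ⟨-, hy⟩
    rw [mem_closedBall, Real.dist_eq, abs_sub_comm] at hy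
    linarith
  have hfin : (dyadic lv '' (F ∩ closedBall x R)).Finite := by
    refine (Set.finite_Icc ⌊(x - R) * 2 ^ lv⌋ ⌊(x + R) * 2 ^ lv⌋).subset ?_
    rintro _ ⟨y, ⟨-, hy⟩, rfl⟩
    rw [mem_closedBall, Real.dist_eq, abs_le] at hy
    constructor <;> refine Int.floor_le_floor ?_ <;> gcongr <;> linarith
  obtain ⟨T, hTs, himg⟩ := (Finset.subset_set_image_iff (t := hfin.toFinset)
    (f := dyadic lv) (s := F ∩ closedBall x R)).1 (by simp)
  refine ⟨(T.image (dyadic lv)).image fun b => {y | dyadic lv y = b}, ?_, ?_, ?_⟩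
  · intro y hy
    have : dyadic lv y ∈ T.image (dyadic lv) := by
      rw [himg, Set.Finite.mem_toFinset]
      exact ⟨y, hy, rfl⟩
    simp only [mem_iUnion]
    exact ⟨_, Finset.mem_image_of_mem _ this, rfl⟩
  · intro U hU a ha b hb
    obtain ⟨c, -, rfl⟩ := Finset.mem_image.1 hU
    exact (abs_sub_le_of_dyadic_eq (ha.trans hb.symm)).trans hk
  · refine (Nat.cast_le.2 Finset.card_image_le).trans ?_
    refine (card_image_le_mul_of_cover T _ (Finset.Icc (dyadic i x - 1) (dyadic i x + 1))
      (fun y b => dyadic i y = b)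
      (fun y hy => ⟨_, dyadic_mem_Icc_of_abs_sub_le (hmem y (hTs hy)), rfl⟩) (ρ ^ k) ?_).trans ?_
    · intro b _
      refine hiter k i _ (fun y hy => ?_) ?_
      · simp at hy; exact (hTs hy.1).1
      · intro x hx y hy
        simp only [Finset.mem_filter] at hx hy
        rw [hx.2, hy.2]
    · rw [Int.card_Icc]
      have h3 : (dyadic i x + 1 + 1 - (dyadic i x - 1)).toNat = 3 := by omega
      rw [h3, mul_assoc]
      push_cast
      gcongr
      rw [hpow k, ← Real.mul_rpow (by positivity) (by positivity)]
      exact Real.rpow_le_rpow (by positivity) hkmin hs0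

end Cells

section ChainCell
open scoped Classical

/-- The points of `S` that can be joined to `z` inside the `b * 2 ^ (-i)`-neighbourhood of `S`. -/
def chainCell (S : Set ℝ) (b : ℝ) (i : ℤ) (z : ℝ) : Set ℝ :=
  {w | w ∈ S ∧ ∀ x ∈ uIcc z w, ∃ v ∈ S, |x - v| ≤ b * (2 : ℝ) ^ (-i)}

variable {S : Set ℝ} {b : ℝ} {i : ℤ}

theorem chainCell_eq_iff (hb : 0 ≤ b) {z z' : ℝ} (hz' : z' ∈ S) :
    chainCell S b i z = chainCell S b i z' ↔
      ∀ x ∈ uIcc z z', ∃ v ∈ S, |x - v| ≤ b * (2 : ℝ) ^ (-i) := by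
  constructor
  · intro h
    have hm : z' ∈ chainCell S b i z' := by
      refine ⟨hz', fun x hx => ⟨z', hz', ?_⟩⟩
      rw [uIcc_self, mem_singleton_iff] at hx
      rw [hx, sub_self, abs_zero]
      positivity
    rw [← h] at hm
    exact hm.2
  · intro h
    ext w
    constructor
    · rintro ⟨hw, hx⟩
      refine ⟨hw, fun x hxm => ?_⟩
      rcases uIcc_subset_uIcc_union_uIcc (b := z) hxm with h1 | h1
      · exact h x (by rwa [uIcc_comm])
      · exact hx x h1
    · rintro ⟨hw, hx⟩
      refine ⟨hw, fun x hxm => ?_⟩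
      rcases uIcc_subset_uIcc_union_uIcc (b := z') hxm with h1 | h1
      · exact h x h1
      · exact hx x h1

theorem chainCell_eq_of_abs_sub_le (hb : 0 ≤ b) {z z' : ℝ} (hz : z ∈ S) (hz' : z' ∈ S)
    (h : |z - z'| ≤ b * (2 : ℝ) ^ (-i)) : chainCell S b i z = chainCell S b i z' := by
  rw [chainCell_eq_iff hb hz']
  intro x hx
  refine ⟨z, hz, ?_⟩
  have := abs_sub_left_of_mem_uIcc hx
  rw [abs_sub_comm z' z] at this
  exact this.trans h

theorem chainCell_nested (hb : 0 ≤ b) {i' : ℤ} (hi : i ≤ i') {z z' : ℝ} (hz' : z' ∈ S)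
    (h : chainCell S b i' z = chainCell S b i' z') :
    chainCell S b i z = chainCell S b i z' := by
  rw [chainCell_eq_iff hb hz'] at h ⊢
  intro x hx
  obtain ⟨v, hv, hxv⟩ := h x hx
  refine ⟨v, hv, hxv.trans ?_⟩
  gcongr
  exact one_le_two

theorem exists_chainCell_diam_bound {d C : ℝ} (hd : d < 1) (hC : 0 < C)
    (h : CoverBound S d C) (hb : 0 < b) :
    ∃ Λ : ℝ, 1 ≤ Λ ∧ ∀ (i : ℤ) (z z' : ℝ), z ∈ S → z' ∈ S →
      chainCell S b i z = chainCell S b i z' → |z - z'| ≤ Λ * (b * (2 : ℝ) ^ (-i)) := by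
  refine ⟨max 1 ((6 * C) ^ (1 / (1 - d))), le_max_left _ _, fun i z z' hz hz' heq => ?_⟩
  set r : ℝ := b * (2 : ℝ) ^ (-i) with hr
  have hr0 : 0 < r := by positivity
  set D : ℝ := |z - z'| with hD
  rcases le_or_gt D r with hDr | hDr
  · exact hDr.trans (le_mul_of_one_le_left hr0.le (le_max_left _ _))
  have hD0 : 0 < D := hr0.trans hDr
  rw [chainCell_eq_iff hb.le hz'] at heq
  obtain ⟨𝒰, h1, h2, h3⟩ := h z hz r (2 * D) hr0 (by linarith)
  have hcov : uIcc z z' ⊆ ⋃ U ∈ 𝒰, Metric.cthickening r U := by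
    intro x hx
    obtain ⟨v, hv, hxv⟩ := heq x hx
    have hxz := abs_sub_left_of_mem_uIcc hx
    have hvb : v ∈ closedBall z (2 * D) := by
      rw [mem_closedBall, Real.dist_eq]
      rw [abs_sub_comm z' z] at hxz
      calc |v - z| = |(x - z) - (x - v)| := by ring_nf
        _ ≤ |x - z| + |x - v| := abs_sub _ _
        _ ≤ _ := by linarith
    have := h1 ⟨hv, hvb⟩
    simp only [mem_iUnion] at this ⊢
    obtain ⟨U, hU, hvU⟩ := this
    refine ⟨U, hU, Metric.mem_cthickening_of_dist_le x v r U hvU ?_⟩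
    rwa [Real.dist_eq]
  have hvol : ENNReal.ofReal D ≤ ENNReal.ofReal (𝒰.card * (3 * r)) := by
    calc ENNReal.ofReal D = volume (uIcc z z') := by rw [Real.volume_interval, hD, abs_sub_comm]
      _ ≤ volume (⋃ U ∈ 𝒰, Metric.cthickening r U) := measure_mono hcov
      _ ≤ ∑ U ∈ 𝒰, volume (Metric.cthickening r U) := measure_biUnion_finset_le _ _
      _ ≤ ∑ U ∈ 𝒰, ENNReal.ofReal (3 * r) := by
          refine Finset.sum_le_sum fun U hU => ?_
          refine (Real.volume_le_diam _).trans ?_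
          have key := ediam_cthickening_le (s := U) r.toNNReal
          rw [Real.coe_toNNReal r hr0.le] at key
          refine key.trans ?_
          have := (ediam_le_ofReal_iff hr0).2 (h2 U hU)
          change ediam U + 2 * ENNReal.ofReal r ≤ _
          calc _ ≤ ENNReal.ofReal r + 2 * ENNReal.ofReal r := by gcongr
            _ = ENNReal.ofReal (3 * r) := by
              rw [show 3 * r = r + (r + r) by ring, ENNReal.ofReal_add hr0.le (by linarith),
                ENNReal.ofReal_add hr0.le hr0.le, two_mul]
      _ = _ := by
          rw [Finset.sum_const, nsmul_eq_mul, ENNReal.ofReal_mul (by positivity)]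
          simp
  rw [ENNReal.ofReal_le_ofReal_iff (by positivity)] at hvol
  set q : ℝ := D / r with hq
  have hq1 : 1 ≤ q := by rw [hq, le_div_iff₀ hr0]; linarith
  have hq0 : 0 < q := by linarith
  have h4 : q ≤ 6 * C * q ^ d := by
    have e : (2 * D / r) ^ d ≤ 2 * q ^ d := by
      rw [mul_div_assoc, Real.mul_rpow two_pos.le hq0.le]
      gcongr
      calc (2 : ℝ) ^ d ≤ 2 ^ (1 : ℝ) := Real.rpow_le_rpow_of_exponent_le one_le_two hd.le
        _ = 2 := Real.rpow_one 2
    rw [hq, div_le_iff₀ hr0]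
    calc D ≤ 𝒰.card * (3 * r) := hvol
      _ ≤ (C * (2 * q ^ d)) * (3 * r) := by
        gcongr
        exact h3.trans (mul_le_mul_of_nonneg_left e hC.le)
      _ = _ := by ring
  have h5 : q ^ (1 - d) ≤ 6 * C := by
    rw [Real.rpow_sub hq0, Real.rpow_one, div_le_iff₀ (by positivity)]
    exact h4
  have h6 : q ≤ (6 * C) ^ (1 / (1 - d)) := by
    calc q = (q ^ (1 - d)) ^ (1 / (1 - d)) := by
          rw [← Real.rpow_mul hq0.le, mul_one_div_cancel (by linarith), Real.rpow_one]
      _ ≤ _ := Real.rpow_le_rpow (by positivity) h5 (by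
          have : 0 < 1 - d := by linarith
          positivity)
  rw [hq, div_le_iff₀ hr0] at h6
  exact h6.trans (mul_le_mul_of_nonneg_right (le_max_right _ _) hr0.le)

theorem card_image_chainCell_le {d C Λ : ℝ} (hC : 0 < C) (h : CoverBound S d C) (hb : 0 < b)
    (hΛ1 : 1 ≤ Λ) (hΛ : ∀ (i : ℤ) (z z' : ℝ), z ∈ S → z' ∈ S →
      chainCell S b i z = chainCell S b i z' → |z - z'| ≤ Λ * (b * (2 : ℝ) ^ (-i)))
    {ι : Type*} (T : Finset ι) (f : ι → ℝ) (hf : ∀ x ∈ T, f x ∈ S) (i : ℤ) (n : ℕ)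
    (hT : ∀ x ∈ T, ∀ y ∈ T, chainCell S b i (f x) = chainCell S b i (f y)) :
    ((T.image fun x => chainCell S b (i + n) (f x)).card : ℝ) ≤ C * (2 * Λ) ^ d * 2 ^ (d * n) := by
  rcases T.eq_empty_or_nonempty with rfl | ⟨x0, hx0⟩
  · simp; positivity
  have h2 : (0 : ℝ) < b * 2 ^ (-i) := by positivity
  have hr : b * (2 : ℝ) ^ (-(i + n : ℤ)) = b * 2 ^ (-i) / 2 ^ n := by
    rw [neg_add, zpow_add₀ two_ne_zero, zpow_neg _ (n : ℤ), zpow_natCast]; ring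
  have hle : b * (2 : ℝ) ^ (-i) / 2 ^ n ≤ b * 2 ^ (-i) :=
    div_le_self h2.le (one_le_pow₀ one_le_two)
  obtain ⟨𝒰, h1, h3, h4⟩ := h (f x0) (hf x0 hx0) (b * 2 ^ (-(i + n : ℤ)))
    (2 * Λ * (b * 2 ^ (-i))) (by positivity) (by rw [hr]; nlinarith)
  have hq : 2 * Λ * (b * (2 : ℝ) ^ (-i)) / (b * 2 ^ (-(i + n : ℤ))) = (2 * Λ) * 2 ^ n := by
    rw [hr]; field_simp
  rw [hq, Real.mul_rpow (by positivity) (by positivity), ← Real.rpow_natCast,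
    ← Real.rpow_mul two_pos.le, mul_comm (n : ℝ)] at h4
  refine (card_image_le_mul_of_cover T _ 𝒰 (fun x U => f x ∈ U) ?_ 1 ?_).trans ?_
  · intro x hx
    have := h1 ⟨hf x hx, by
      rw [mem_closedBall, Real.dist_eq]
      have := hΛ i _ _ (hf x hx) (hf x0 hx0) (hT x hx x0 hx0)
      nlinarith⟩
    simpa using this
  · intro U hU
    have : ((T.filter fun x => f x ∈ U).image fun x => chainCell S b (i + n) (f x)).card ≤ 1 := by
      rw [Finset.card_le_one]
      simp only [Finset.mem_image, Finset.mem_filter]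
      rintro _ ⟨x, ⟨hx, hxU⟩, rfl⟩ _ ⟨y, ⟨hy, hyU⟩, rfl⟩
      exact chainCell_eq_of_abs_sub_le hb.le (hf x hx) (hf y hy) (h3 U hU _ hxU _ hyU)
    exact_mod_cast this
  · rw [mul_one, mul_assoc]
    exact h4

end ChainCell

section Tree
open scoped Classical MeasureTheory

theorem zpow_lt_abs_sub_of_two_le_dyadic_sub {i : ℤ} {x y : ℝ}
    (h : 2 ≤ |dyadic i x - dyadic i y|) : (2 : ℝ) ^ (-i) ≤ |x - y| := by
  have h2 : (0 : ℝ) < 2 ^ i := by positivity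
  rw [zpow_neg, ← one_div, div_le_iff₀ h2, ← abs_of_pos h2, ← abs_mul, sub_mul]
  unfold dyadic at h
  have a1 := Int.floor_le (x * 2 ^ i)
  have a2 := Int.lt_floor_add_one (x * 2 ^ i)
  have b1 := Int.floor_le (y * 2 ^ i)
  have b2 := Int.lt_floor_add_one (y * 2 ^ i)
  rw [le_abs] at h ⊢
  rcases h with h | h
  · left
    have : (2 : ℝ) ≤ ⌊x * 2 ^ i⌋ - ⌊y * 2 ^ i⌋ := by exact_mod_cast h
    linarith
  · right
    have : (2 : ℝ) ≤ -((⌊x * 2 ^ i⌋ : ℝ) - ⌊y * 2 ^ i⌋) := by exact_mod_cast h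
    linarith

theorem abs_sub_le_of_dyadic_sub_le_one {i : ℤ} {x y : ℝ}
    (h : |dyadic i x - dyadic i y| < 2) : |x - y| ≤ 2 * (2 : ℝ) ^ (-i) := by
  have h2 : (0 : ℝ) < 2 ^ i := by positivity
  rw [zpow_neg, ← div_eq_mul_inv, le_div_iff₀ h2, ← abs_of_pos h2, ← abs_mul, sub_mul]
  unfold dyadic at h
  have a1 := Int.floor_le (x * 2 ^ i)
  have a2 := Int.lt_floor_add_one (x * 2 ^ i)
  have b1 := Int.floor_le (y * 2 ^ i)
  have b2 := Int.lt_floor_add_one (y * 2 ^ i)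
  have h' : |⌊x * 2 ^ i⌋ - ⌊y * 2 ^ i⌋| ≤ 1 := by omega
  have h3 : |(⌊x * 2 ^ i⌋ : ℝ) - ⌊y * 2 ^ i⌋| ≤ 1 := by exact_mod_cast h'
  rw [abs_le] at h3 ⊢
  constructor <;> linarith [h3.1, h3.2]

/-- A set of positive `τ`-dimensional Hausdorff measure contains, at every small scale, two
separated subsets of positive measure. -/
theorem exists_separated_subsets {G : Set ℝ} {τ B : ℝ} (hτ : 0 < τ) (hG : μH[τ] G ≠ 0)
    (hB : ∀ x ∈ G, |x| ≤ B) {κ : ℕ} (hκ : 1 < κ * τ) :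
    ∃ w₀ : ℕ, ∀ w : ℕ, w₀ ≤ w → ∃ G' G'' : Set ℝ, G' ⊆ G ∧ G'' ⊆ G ∧ μH[τ] G' ≠ 0 ∧ μH[τ] G'' ≠ 0 ∧
      ∀ x ∈ G', ∀ y ∈ G'', (2 : ℝ) ^ (-((κ * w : ℕ) : ℤ)) ≤ |x - y| ∧
        |x - y| ≤ (2 : ℝ) ^ (-(w : ℤ)) := by
  by_contra! H
  choose w hw hbad using H
  refine hG ?_
  set cell : ℕ → ℝ → Set ℝ := fun k x =>
    {y ∈ G | dyadic (κ * w k : ℕ) y = dyadic (κ * w k : ℕ) x} with hcell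
  set N : ℕ → Set ℝ := fun k => {x ∈ G | μH[τ] (cell k x) = 0} with hN
  have hNnull : ∀ k, μH[τ] (N k) = 0 := by
    intro k
    have hsub : N k ⊆ ⋃ l : ℤ, {x ∈ N k | dyadic (κ * w k : ℕ) x = l} := by
      intro x hx
      simp only [mem_iUnion]
      exact ⟨_, hx, rfl⟩
    refine measure_mono_null hsub (measure_iUnion_null fun l => ?_)
    rcases ({x ∈ N k | dyadic (κ * w k : ℕ) x = l}).eq_empty_or_nonempty with h | ⟨x, hx, hxl⟩
    · rw [h]; simp
    · refine measure_mono_null ?_ hx.2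
      rintro y ⟨hy, hyl⟩
      exact ⟨hy.1, hyl.trans hxl.symm⟩
  have hκ0 : 1 ≤ κ := by
    rcases Nat.eq_zero_or_pos κ with h | h
    · rw [h] at hκ; norm_num at hκ
    · exact h
  have hheavy : ∀ k, ∀ x ∈ G \ N k, ∀ y ∈ G \ N k, dyadic (w k) x = dyadic (w k) y →
      |x - y| ≤ 2 * (2 : ℝ) ^ (-((κ * w k : ℕ) : ℤ)) := by
    intro k x hx y hy hxy
    by_contra hlt
    have h2 : 2 ≤ |dyadic ((κ * w k : ℕ) : ℤ) x - dyadic ((κ * w k : ℕ) : ℤ) y| := by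
      by_contra h
      exact hlt (abs_sub_le_of_dyadic_sub_le_one (by omega))
    have hle : (w k : ℤ) ≤ (κ * w k : ℕ) := by exact_mod_cast Nat.le_mul_of_pos_left _ hκ0
    have hpos : ∀ z ∈ G \ N k, μH[τ] (cell k z) ≠ 0 := fun z hz h0 => hz.2 ⟨hz.1, h0⟩
    obtain ⟨x', hx', y', hy', hb⟩ := hbad k (cell k x) (cell k y) (fun z hz => hz.1)
      (fun z hz => hz.1) (hpos x hx) (hpos y hy)
    have h3 := hb (zpow_lt_abs_sub_of_two_le_dyadic_sub (by rw [hx'.2, hy'.2]; exact h2))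
    refine absurd (abs_sub_le_of_dyadic_eq ?_) (not_le.2 h3)
    rw [dyadic_nested hle hx'.2, dyadic_nested hle hy'.2, hxy]
  have hwt : Tendsto w atTop atTop := tendsto_atTop_mono hw tendsto_id
  have hB0 : 0 ≤ B := by
    rcases G.eq_empty_or_nonempty with h | ⟨x, hx⟩
    · exact absurd (by rw [h]; simp) hG
    · exact (abs_nonneg x).trans (hB x hx)
  set ρ : ℝ := 2 ^ (1 - κ * τ) with hρ
  have hρ1 : ρ < 1 := Real.rpow_lt_one_of_one_lt_of_neg one_lt_two (by linarith)
  have hreal : Tendsto (fun k => ENNReal.ofReal ((2 * B + 2) * 2 ^ τ * ρ ^ w k)) atTop (𝓝 0) := by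
    have h1 : Tendsto (fun k => (2 * B + 2) * 2 ^ τ * ρ ^ w k) atTop
        (𝓝 ((2 * B + 2) * 2 ^ τ * 0)) :=
      ((tendsto_pow_atTop_nhds_zero_of_lt_one (by positivity) hρ1).comp hwt).const_mul _
    have h2 := ENNReal.tendsto_ofReal h1
    rwa [mul_zero, ENNReal.ofReal_zero] at h2
  have hmain : μH[τ] (G \ ⋃ k, N k) = 0 := by
    set K : ℕ → Finset ℤ := fun k => Finset.Icc ⌊-B * 2 ^ (w k : ℤ)⌋ ⌊B * 2 ^ (w k : ℤ)⌋ with hK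
    have hcount : ∀ k, ((K k).card : ℝ) * (2 * (2 : ℝ) ^ (-((κ * w k : ℕ) : ℤ))) ^ τ ≤
        (2 * B + 2) * 2 ^ τ * ρ ^ w k := by
      intro k
      have h2w : (1 : ℝ) ≤ 2 ^ w k := one_le_pow₀ one_le_two
      have hcard : ((K k).card : ℝ) ≤ (2 * B + 2) * 2 ^ w k := by
        simp only [hK, Int.card_Icc, zpow_natCast]
        have h1 := Int.floor_le (B * 2 ^ w k)
        have h2 := Int.lt_floor_add_one (-B * 2 ^ w k)
        have h3 : ⌊-B * 2 ^ w k⌋ ≤ ⌊B * 2 ^ w k⌋ := Int.floor_le_floor (by gcongr; linarith)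
        have e : (((⌊B * 2 ^ w k⌋ + 1 - ⌊-B * 2 ^ w k⌋).toNat : ℤ) : ℝ) =
            ((⌊B * 2 ^ w k⌋ + 1 - ⌊-B * 2 ^ w k⌋ : ℤ) : ℝ) := by
          rw [Int.toNat_of_nonneg (by omega)]
        rw [Int.cast_natCast] at e
        rw [e]
        push_cast
        linarith
      have hpw : (2 * (2 : ℝ) ^ (-((κ * w k : ℕ) : ℤ))) ^ τ = 2 ^ τ * 2 ^ (-(κ * w k * τ)) := by
        rw [Real.mul_rpow two_pos.le (by positivity), ← Real.rpow_intCast,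
          ← Real.rpow_mul two_pos.le]
        push_cast
        ring_nf
      have hρw : ρ ^ w k = 2 ^ w k * 2 ^ (-(κ * w k * τ)) := by
        rw [hρ, ← Real.rpow_natCast, ← Real.rpow_mul two_pos.le, ← Real.rpow_natCast,
          ← Real.rpow_add two_pos]
        ring_nf
      rw [hpw, hρw]
      calc _ ≤ ((2 * B + 2) * 2 ^ w k) * (2 ^ τ * 2 ^ (-(κ * w k * τ))) := by gcongr
        _ = _ := by ring
    have hlim := Measure.hausdorffMeasure_le_liminf_sum (X := ℝ) (ι := fun k => K k) τ
      (G \ ⋃ k, N k) (l := atTop)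
      (fun k => ENNReal.ofReal (2 * (2 : ℝ) ^ (-((κ * w k : ℕ) : ℤ)))) ?_
      (fun k l => {x ∈ G \ N k | dyadic (w k) x = l}) ?_ ?_
    · refine le_antisymm (hlim.trans ?_) zero_le
      refine (tendsto_of_tendsto_of_tendsto_of_le_of_le tendsto_const_nhds hreal
        (fun _ => zero_le) fun k => ?_).liminf_eq.le
      calc _ ≤ ∑ l : K k, ENNReal.ofReal (2 * (2 : ℝ) ^ (-((κ * w k : ℕ) : ℤ))) ^ τ := by
            refine Finset.sum_le_sum fun l _ => ENNReal.rpow_le_rpow ?_ hτ.le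
            rw [ediam_le_ofReal_iff (by positivity)]
            rintro x ⟨hx, hxl⟩ y ⟨hy, hyl⟩
            exact hheavy k x hx y hy (hxl.trans hyl.symm)
        _ = ENNReal.ofReal ((K k).card * (2 * (2 : ℝ) ^ (-((κ * w k : ℕ) : ℤ))) ^ τ) := by
            rw [Finset.sum_const, nsmul_eq_mul, ENNReal.ofReal_rpow_of_pos (by positivity),
              ENNReal.ofReal_mul (by positivity), Finset.card_univ, Fintype.card_coe,
              ENNReal.ofReal_natCast]
        _ ≤ _ := ENNReal.ofReal_le_ofReal (hcount k)
    · have : Tendsto (fun k => 2 * (1 / 2 : ℝ) ^ (κ * w k)) atTop (𝓝 (2 * 0)) :=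
        ((tendsto_pow_atTop_nhds_zero_of_lt_one (by norm_num) (by norm_num)).comp
          ((hwt.const_mul_atTop' (by omega)))).const_mul 2
      have h2 := ENNReal.tendsto_ofReal this
      rw [mul_zero, ENNReal.ofReal_zero] at h2
      refine h2.congr fun k => ?_
      rw [zpow_neg, zpow_natCast, one_div_pow, one_div]
    · refine Eventually.of_forall fun k l => ?_
      rw [ediam_le_ofReal_iff (by positivity)]
      rintro x ⟨hx, hxl⟩ y ⟨hy, hyl⟩
      exact hheavy k x hx y hy (hxl.trans hyl.symm)
    · refine Eventually.of_forall fun k x hx => ?_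
      have hxB := abs_le.1 (hB x hx.1)
      simp only [mem_iUnion]
      refine ⟨⟨dyadic (w k) x, ?_⟩, ⟨hx.1, fun h => hx.2 (mem_iUnion.2 ⟨k, h⟩)⟩, rfl⟩
      simp only [hK, Finset.mem_Icc]
      constructor <;> refine Int.floor_le_floor ?_ <;> gcongr <;> linarith
  have hsub : G ⊆ (G \ ⋃ k, N k) ∪ ⋃ k, N k := by
    intro x hx
    by_cases h : x ∈ ⋃ k, N k
    · exact Or.inr h
    · exact Or.inl ⟨hx, h⟩
  exact measure_mono_null hsub (measure_union_null hmain (measure_iUnion_null hNnull))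

/-- A binary tree of points of `F` in which the two subtrees at each node are separated at
prescribed rapidly decreasing scales. -/
theorem exists_separated_tree {F : Set ℝ} {τ B : ℝ} (hτ : 0 < τ) (hF : μH[τ] F ≠ 0)
    (hB : ∀ x ∈ F, |x| ≤ B) {κ : ℕ} (hκ : 1 < κ * τ) {m W : ℕ} (hm : 1 ≤ m) (hW : 1 ≤ W) (I : ℕ) :
    ∃ w : ℕ → ℕ, (∀ i, W ≤ w i) ∧ (∀ i, m ∣ w i) ∧ (∀ i, (1 + κ) * w i ∣ w (i + 1)) ∧
      ∃ e : (Fin I → Bool) → ℝ, (∀ σ, e σ ∈ F) ∧ ∀ (i : Fin I) (σ : Fin I → Bool),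
        (2 : ℝ) ^ (-((κ * w i : ℕ) : ℤ)) ≤ |e σ - e (Function.update σ i (!σ i))| ∧
        |e σ - e (Function.update σ i (!σ i))| ≤ (2 : ℝ) ^ (-(w i : ℤ)) := by
  suffices H : ∃ w : ℕ → ℕ, (∀ i, W ≤ w i) ∧ (∀ i, m ∣ w i) ∧ (∀ i, (1 + κ) * w i ∣ w (i + 1)) ∧
      ∃ G : (Fin I → Bool) → Set ℝ, (∀ σ, G σ ⊆ F) ∧ (∀ σ, μH[τ] (G σ) ≠ 0) ∧
      ∀ (i : Fin I) (σ : Fin I → Bool), ∀ x ∈ G σ, ∀ y ∈ G (Function.update σ i (!σ i)),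
        (2 : ℝ) ^ (-((κ * w i : ℕ) : ℤ)) ≤ |x - y| ∧ |x - y| ≤ (2 : ℝ) ^ (-(w i : ℤ)) by
    obtain ⟨w, h1, h2, h3, G, hG, hGpos, hsep⟩ := H
    have hne : ∀ σ, (G σ).Nonempty := fun σ => nonempty_of_measure_ne_zero (hGpos σ)
    choose e he using hne
    exact ⟨w, h1, h2, h3, e, fun σ => hG σ (he σ), fun i σ => hsep i σ _ (he _) _ (he _)⟩
  induction I with
  | zero =>
    refine ⟨fun i => W * m * (1 + κ) ^ i, fun i => ?_, fun i => ?_, fun i => ?_, fun _ => F,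
      fun _ => Subset.rfl, fun _ => hF, fun i => i.elim0⟩
    · exact Nat.le_of_dvd (by positivity) ⟨m * (1 + κ) ^ i, by ring⟩
    · exact ⟨W * (1 + κ) ^ i, by ring⟩
    · exact ⟨1, by ring⟩
  | succ I ih =>
    obtain ⟨w, h1, h2, h3, G, hG, hGpos, hsep⟩ := ih
    choose w₀ hw₀ using fun σ => exists_separated_subsets hτ (hGpos σ)
      (fun x hx => hB x (hG σ hx)) hκ
    set t : ℕ := ∑ σ, w₀ σ + 1 with ht
    have hle : ∀ σ, w₀ σ ≤ w I * t := by
      intro σ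
      calc w₀ σ ≤ ∑ σ, w₀ σ := Finset.single_le_sum (fun _ _ => Nat.zero_le _) (Finset.mem_univ σ)
        _ ≤ t := by omega
        _ ≤ w I * t := Nat.le_mul_of_pos_left _ (by have := h1 I; omega)
    choose G' G'' hG' hG'' hp' hp'' hcross using fun σ => hw₀ σ (w I * t) (hle σ)
    refine ⟨fun i => if i < I then w i else w i * t, fun i => ?_, fun i => ?_, fun i => ?_,
      fun σ => if σ (Fin.last I) then G'' (Fin.init σ) else G' (Fin.init σ), ?_, ?_, ?_⟩
    · dsimp only
      split_ifs
      · exact h1 i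
      · exact (h1 i).trans (Nat.le_mul_of_pos_right _ (by omega))
    · dsimp only
      split_ifs
      · exact h2 i
      · exact (h2 i).mul_right _
    · dsimp only
      split_ifs
      · exact h3 i
      · exact (h3 i).mul_right _
      · omega
      · rw [← mul_assoc]
        exact Nat.mul_dvd_mul (h3 i) dvd_rfl
    · intro σ
      dsimp only
      split_ifs
      · exact (hG'' _).trans (hG _)
      · exact (hG' _).trans (hG _)
    · intro σ
      dsimp only
      split_ifs
      · exact hp'' _
      · exact hp' _
    · intro i
      refine Fin.lastCases ?_ (fun i => ?_) i
      · intro σ x hx y hy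
        simp only [Function.update_self, Fin.init_update_last, Fin.val_last, lt_irrefl,
          if_false] at hx hy ⊢
        cases hσ : σ (Fin.last I) with
        | false =>
          simp only [hσ] at hx hy
          exact hcross _ x (by simpa using hx) y (by simpa using hy)
        | true =>
          simp only [hσ] at hx hy
          rw [abs_sub_comm]
          exact hcross _ y (by simpa using hy) x (by simpa using hx)
      · intro σ x hx y hy
        have hsub : ∀ ρ : Fin (I + 1) → Bool,
            (if ρ (Fin.last I) then G'' (Fin.init ρ) else G' (Fin.init ρ)) ⊆ G (Fin.init ρ) := by
          intro ρ
          split_ifs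
          · exact hG'' _
          · exact hG' _
        have hx' := hsub _ hx
        have hy' := hsub _ hy
        rw [Fin.init_update_castSucc] at hy'
        simp only [Fin.val_castSucc, i.2, if_true]
        exact hsep i _ x hx' y hy'

end Tree

section Information
open scoped Classical

variable {Ω α β γ δ ε ζ : Type*}

theorem entropy_cond_antitone (s : Finset Ω) (f : Ω → α) (A : Ω → β) (A' : Ω → γ)
    (h : ∀ p ∈ s, ∀ q ∈ s, A' p = A' q → A p = A q) :
    entropy s (fun p => (f p, A' p)) - entropy s A' ≤
      entropy s (fun p => (f p, A p)) - entropy s A := by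
  have h1 := entropy_submodular s f A' A
  have e1 : entropy s (fun p => ((f p, A' p), A p)) = entropy s (fun p => (f p, A' p)) :=
    entropy_congr fun p hp q hq => by
      have := h p hp q hq
      simp only [Prod.mk.injEq]; tauto
  have e2 : entropy s (fun p => (A' p, A p)) = entropy s A' :=
    entropy_congr fun p hp q hq => by
      have := h p hp q hq
      simp only [Prod.mk.injEq]; tauto
  linarith

theorem entropy_info_le (s : Finset Ω) (X : Ω → α) (W : Ω → β) (b : Ω → γ) (y' : Ω → δ)
    (y : Ω → ε) (A : Ω → ζ) (hXW : ∀ p ∈ s, ∀ q ∈ s, X p = X q → W p = W q)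
    (hby' : ∀ p ∈ s, ∀ q ∈ s, b p = b q → y' p = y' q)
    (hby : ∀ p ∈ s, ∀ q ∈ s, b p = b q → y p = y q)
    (hA : ∀ p ∈ s, ∀ q ∈ s, A p = A q → y p = y q ∧ W p = W q)
    (hXA : ∀ p ∈ s, ∀ q ∈ s, X p = X q → y p = y q → A p = A q) :
    entropy s (fun p => (X p, A p)) + entropy s (fun p => (y' p, A p)) -
        entropy s (fun p => ((X p, y' p), A p)) - entropy s A ≤
      (entropy s X - entropy s (fun p => (b p, X p))) -
        (entropy s W - entropy s (fun p => (b p, W p))) := by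
  have ha := entropy_cond_antitone s y' (fun p => (y p, W p)) A
    fun p hp q hq h => by rw [(hA p hp q hq h).1, (hA p hp q hq h).2]
  have h1 := entropy_submodular s X y W
  have h2 := entropy_submodular s X b (fun p => (y' p, (y p, W p)))
  have e0 : entropy s (fun p => (X p, W p)) = entropy s X :=
    entropy_congr fun p hp q hq => by
      have := hXW p hp q hq
      simp only [Prod.mk.injEq]; tauto
  have e1 : entropy s (fun p => (X p, A p)) = entropy s (fun p => ((X p, y p), W p)) :=
    entropy_congr fun p hp q hq => by
      have := hXW p hp q hq
      have := hA p hp q hq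
      have := hXA p hp q hq
      simp only [Prod.mk.injEq]; tauto
  have e2 : entropy s (fun p => ((X p, y' p), A p)) =
      entropy s (fun p => (X p, (y' p, (y p, W p)))) :=
    entropy_congr fun p hp q hq => by
      have := hXW p hp q hq
      have := hA p hp q hq
      have := hXA p hp q hq
      simp only [Prod.mk.injEq]; tauto
  have e3 : entropy s (fun p => ((X p, b p), (y' p, (y p, W p)))) =
      entropy s (fun p => (b p, X p)) :=
    entropy_congr fun p hp q hq => by
      have := hXW p hp q hq
      have := hby p hp q hq
      have := hby' p hp q hq
      simp only [Prod.mk.injEq]; tauto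
  have e4 : entropy s (fun p => (b p, (y' p, (y p, W p)))) =
      entropy s (fun p => (b p, W p)) :=
    entropy_congr fun p hp q hq => by
      have := hby p hp q hq
      have := hby' p hp q hq
      simp only [Prod.mk.injEq]; tauto
  linarith

theorem sum_range_shift_three_le {g : ℕ → ℝ} (hg : Monotone g) (T : ℕ) :
    ∑ t ∈ Finset.range T, (g (t + 3) - g t) ≤ 3 * (g (T + 2) - g 0) := by
  have key : ∑ t ∈ Finset.range T, (g (t + 3) - g t) =
      g T + g (T + 1) + g (T + 2) - g 0 - g 1 - g 2 := by
    induction T with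
    | zero => rw [Finset.sum_range_zero]; ring
    | succ T ih => rw [Finset.sum_range_succ, ih]; ring
  have h1 := hg (show T ≤ T + 2 by omega)
  have h2 := hg (show T + 1 ≤ T + 2 by omega)
  have h3 := hg (show 0 ≤ 1 by omega)
  have h4 := hg (show 0 ≤ 2 by omega)
  linarith

end Information

section Cells
open scoped Classical

/-- A nested family of partitions of `S`, one for each dyadic scale, whose cells have comparable
diameter and few subcells. -/
structure CellSystem (F S : Set ℝ) (cell : ℤ → ℝ → Set ℝ) (B Λ C d : ℝ) : Prop where
  one_le_B : 1 ≤ B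
  bound : ∀ x ∈ F, |x| ≤ B
  mem : ∀ a ∈ F, ∀ a' ∈ F, ∀ e ∈ F, a + e * a' ∈ S
  one_le_Λ : 1 ≤ Λ
  one_le_C : 1 ≤ C
  d_nonneg : 0 ≤ d
  eq_of_near : ∀ (i : ℤ) (z z' : ℝ), z ∈ S → z' ∈ S → |z - z'| ≤ (1 + B) * (2 : ℝ) ^ (-i) →
    cell i z = cell i z'
  nested : ∀ (i i' : ℤ) (z z' : ℝ), i ≤ i' → z ∈ S → z' ∈ S → cell i' z = cell i' z' →
    cell i z = cell i z'
  near_of_eq : ∀ (i : ℤ) (z z' : ℝ), z ∈ S → z' ∈ S → cell i z = cell i z' →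
    |z - z'| ≤ Λ * ((1 + B) * (2 : ℝ) ^ (-i))
  card_le : ∀ (T : Finset (ℝ × ℝ)) (f : ℝ × ℝ → ℝ) (i : ℤ) (n : ℕ), (∀ p ∈ T, f p ∈ S) →
    (∀ p ∈ T, ∀ q ∈ T, cell i (f p) = cell i (f q)) →
    ((T.image fun p => cell (i + n) (f p)).card : ℝ) ≤ C * 2 ^ (d * n)

/-- The pair of dyadic intervals of level `i` containing the coordinates of `p`. -/
def dyadicSquare (i : ℤ) (p : ℝ × ℝ) : ℤ × ℤ := (dyadic i p.1, dyadic i p.2)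

/-- The cell of level `i` containing the projection `p.1 + e * p.2`. -/
def projCell (cell : ℤ → ℝ → Set ℝ) (e : ℝ) (i : ℤ) (p : ℝ × ℝ) : Set ℝ := cell i (p.1 + e * p.2)

/-- A finite subset of `F × F` inside one dyadic square of level `j`. -/
structure IsPiece (F : Set ℝ) (j : ℤ) (s : Finset (ℝ × ℝ)) : Prop where
  mem : ∀ p ∈ s, p.1 ∈ F ∧ p.2 ∈ F
  eq : ∀ p ∈ s, ∀ q ∈ s, dyadicSquare j p = dyadicSquare j q

/-- The loss of information about the dyadic square of level `j + u` between levels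
`j + u` and `j + n` of the projection. -/
def infoLoss (cell : ℤ → ℝ → Set ℝ) (s : Finset (ℝ × ℝ)) (e : ℝ) (j : ℤ) (u n : ℕ) : ℝ :=
  (entropy s (projCell cell e (j + n)) -
    entropy s (fun p => (dyadicSquare (j + u) p, projCell cell e (j + n) p))) -
  (entropy s (projCell cell e (j + u)) -
    entropy s (fun p => (dyadicSquare (j + u) p, projCell cell e (j + u) p)))

theorem dyadicSquare_nested {i i' : ℤ} (h : i ≤ i') {p q : ℝ × ℝ}
    (hpq : dyadicSquare i' p = dyadicSquare i' q) : dyadicSquare i p = dyadicSquare i q := by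
  simp only [dyadicSquare, Prod.mk.injEq] at hpq ⊢
  exact ⟨dyadic_nested h hpq.1, dyadic_nested h hpq.2⟩

variable {F S : Set ℝ} {cell : ℤ → ℝ → Set ℝ} {B Λ C d : ℝ}

theorem CellSystem.projCell_eq_of_dyadicSquare_eq (h : CellSystem F S cell B Λ C d) {e : ℝ}
    (he : e ∈ F) {i : ℤ} {p q : ℝ × ℝ} (hp : p.1 ∈ F ∧ p.2 ∈ F) (hq : q.1 ∈ F ∧ q.2 ∈ F)
    (hpq : dyadicSquare i p = dyadicSquare i q) : projCell cell e i p = projCell cell e i q := by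
  simp only [dyadicSquare, Prod.mk.injEq] at hpq
  refine h.eq_of_near i _ _ (h.mem _ hp.1 _ hp.2 _ he) (h.mem _ hq.1 _ hq.2 _ he) ?_
  have h1 := abs_sub_le_of_dyadic_eq hpq.1
  have h2 := abs_sub_le_of_dyadic_eq hpq.2
  have h3 : |e * (p.2 - q.2)| ≤ B * 2 ^ (-i) := by
    rw [abs_mul]
    exact mul_le_mul (h.bound e he) h2 (abs_nonneg _) (by linarith [h.one_le_B])
  calc |p.1 + e * p.2 - (q.1 + e * q.2)| = |(p.1 - q.1) + e * (p.2 - q.2)| := by ring_nf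
    _ ≤ |p.1 - q.1| + |e * (p.2 - q.2)| := abs_add_le _ _
    _ ≤ _ := by linarith

theorem CellSystem.projCell_nested (h : CellSystem F S cell B Λ C d) {e : ℝ}
    (he : e ∈ F) {i i' : ℤ} (hi : i ≤ i') {p q : ℝ × ℝ} (hp : p.1 ∈ F ∧ p.2 ∈ F)
    (hq : q.1 ∈ F ∧ q.2 ∈ F) (hpq : projCell cell e i' p = projCell cell e i' q) :
    projCell cell e i p = projCell cell e i q :=
  h.nested i i' _ _ hi (h.mem _ hp.1 _ hp.2 _ he) (h.mem _ hq.1 _ hq.2 _ he) hpq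

theorem card_image_dyadic_le_of_abs_sub_le {ι : Type*} (T : Finset ι) (f : ι → ℝ) (i : ℤ) {D : ℝ}
    (hD : 0 ≤ D) (h : ∀ x ∈ T, ∀ y ∈ T, |f x - f y| ≤ D * (2 : ℝ) ^ (-i)) :
    ((T.image fun x => dyadic i (f x)).card : ℝ) ≤ 2 * D + 2 := by
  rcases T.eq_empty_or_nonempty with rfl | ⟨x0, hx0⟩
  · simp; positivity
  have h2 : (0 : ℝ) < 2 ^ i := by positivity
  have hsub : (T.image fun x => dyadic i (f x)) ⊆
      Finset.Icc ⌊f x0 * 2 ^ i - D⌋ ⌊f x0 * 2 ^ i + D⌋ := by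
    intro b hb
    obtain ⟨x, hx, rfl⟩ := Finset.mem_image.1 hb
    have := h x hx x0 hx0
    rw [zpow_neg, ← div_eq_mul_inv, le_div_iff₀ h2, ← abs_of_pos h2, ← abs_mul, sub_mul,
      abs_le] at this
    rw [Finset.mem_Icc]
    constructor <;> refine Int.floor_le_floor ?_ <;> linarith [this.1, this.2]
  refine (Nat.cast_le.2 (Finset.card_le_card hsub)).trans ?_
  rw [Int.card_Icc]
  have h1 := Int.floor_le (f x0 * 2 ^ i + D)
  have h2 := Int.lt_floor_add_one (f x0 * 2 ^ i - D)
  have h3 : ⌊f x0 * 2 ^ i - D⌋ ≤ ⌊f x0 * 2 ^ i + D⌋ := Int.floor_le_floor (by linarith)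
  have e : (((⌊f x0 * 2 ^ i + D⌋ + 1 - ⌊f x0 * 2 ^ i - D⌋).toNat : ℤ) : ℝ) =
      ((⌊f x0 * 2 ^ i + D⌋ + 1 - ⌊f x0 * 2 ^ i - D⌋ : ℤ) : ℝ) := by
    rw [Int.toNat_of_nonneg (by omega)]
  rw [Int.cast_natCast] at e
  rw [e]
  push_cast
  linarith

end Cells

section Pair
open scoped Classical

variable {F S : Set ℝ} {cell : ℤ → ℝ → Set ℝ} {B Λ C d : ℝ}

theorem CellSystem.infoLoss_nonneg (h : CellSystem F S cell B Λ C d) {e : ℝ} (he : e ∈ F)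
    {j : ℤ} {s : Finset (ℝ × ℝ)} (hs : IsPiece F j s) {u n : ℕ} (hun : u ≤ n) :
    0 ≤ infoLoss cell s e j u n := by
  have := entropy_cond_antitone s (dyadicSquare (j + u)) (projCell cell e (j + u))
    (projCell cell e (j + n)) fun p hp q hq =>
      h.projCell_nested he (by omega) (hs.mem p hp) (hs.mem q hq)
  unfold infoLoss
  linarith

theorem CellSystem.projCell_transfer (h : CellSystem F S cell B Λ C d) {e e' : ℝ} (he : e ∈ F)
    (he' : e' ∈ F) {i : ℤ} {m : ℕ} (hm : Λ + 1 ≤ 2 ^ m) {p q : ℝ × ℝ} (hp : p.1 ∈ F ∧ p.2 ∈ F)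
    (hq : q.1 ∈ F ∧ q.2 ∈ F) (hpq : projCell cell e i p = projCell cell e i q)
    (hθ : |(e' - e) * (p.2 - q.2)| ≤ (2 : ℝ) ^ (-i)) :
    projCell cell e' (i - m) p = projCell cell e' (i - m) q := by
  refine h.eq_of_near _ _ _ (h.mem _ hp.1 _ hp.2 _ he') (h.mem _ hq.1 _ hq.2 _ he') ?_
  have h1 := h.near_of_eq i _ _ (h.mem _ hp.1 _ hp.2 _ he) (h.mem _ hq.1 _ hq.2 _ he) hpq
  have hB := h.one_le_B
  have hpos : (0 : ℝ) < 2 ^ (-i) := by positivity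
  have e1 : (2 : ℝ) ^ (-(i - m)) = 2 ^ (-i) * 2 ^ m := by
    rw [neg_sub, sub_eq_neg_add, zpow_add₀ two_ne_zero, zpow_natCast]
  have h2 : (1 + B) * (2 : ℝ) ^ (-i) * (Λ + 1) ≤ (1 + B) * 2 ^ (-i) * 2 ^ m := by gcongr
  calc |p.1 + e' * p.2 - (q.1 + e' * q.2)|
      = |(p.1 + e * p.2 - (q.1 + e * q.2)) + (e' - e) * (p.2 - q.2)| := by ring_nf
    _ ≤ Λ * ((1 + B) * 2 ^ (-i)) + 2 ^ (-i) := (abs_add_le _ _).trans (add_le_add h1 hθ)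
    _ ≤ (1 + B) * 2 ^ (-i) * (Λ + 1) := by nlinarith
    _ ≤ _ := by rw [e1]; linarith

theorem CellSystem.entropy_dyadic_cond_le (h : CellSystem F S cell B Λ C d) {j : ℤ}
    {s : Finset (ℝ × ℝ)} (hs : IsPiece F j s) {m : ℕ} (hm : Λ + 1 ≤ 2 ^ m) {e0 e1 : ℝ}
    (he0 : e0 ∈ F) (he1 : e1 ∈ F) {v : ℤ} (hv : (2 : ℝ) ^ (-v - 1) < |e1 - e0|)
    (hv' : |e1 - e0| ≤ (2 : ℝ) ^ (-v)) {k : ℤ} {u : ℕ} (hk : k + m ≤ u) :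
    entropy s (fun p => (dyadic (j + k + m) p.2,
        (dyadic (j + k) p.2, projCell cell e1 (j + v + k - m) p))) -
      entropy s (fun p => (dyadic (j + k) p.2, projCell cell e1 (j + v + k - m) p)) ≤
    Real.log 2 * (s.card * (6 + 2 * (2 * (Λ * (1 + B)))) + (2 * (Λ * (1 + B)) * 2 ^ (3 * m)) ^ 2 *
      (((entropy s (projCell cell e0 (j + v + k + m)) -
          entropy s (fun p => (dyadicSquare (j + u) p, projCell cell e0 (j + v + k + m) p))) -
        (entropy s (projCell cell e0 (j + v + k - m - m)) -
          entropy s (fun p => (dyadicSquare (j + u) p, projCell cell e0 (j + v + k - m - m) p)))) +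
       ((entropy s (projCell cell e1 (j + v + k + m)) -
          entropy s (fun p => (dyadicSquare (j + u) p, projCell cell e1 (j + v + k + m) p))) -
        (entropy s (projCell cell e1 (j + v + k - m)) -
          entropy s (fun p => (dyadicSquare (j + u) p, projCell cell e1 (j + v + k - m) p)))))) := by
  have hΛ := h.one_le_Λ
  have hB := h.one_le_B
  have hΛB : 1 ≤ Λ * (1 + B) := by nlinarith
  have hpm : ∀ n : ℕ, (1 : ℝ) ≤ 2 ^ n := fun n => one_le_pow₀ (by norm_num)
  set θ := e1 - e0 with hθ
  have hθ0 : 0 < |θ| := lt_trans (by positivity) hv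
  have hθne : θ ≠ 0 := abs_pos.1 hθ0
  have hθs : ∀ p q : ℝ × ℝ, dyadic (j + k) p.2 = dyadic (j + k) q.2 →
      |θ * (p.2 - q.2)| ≤ (2 : ℝ) ^ (-(j + v + k)) := by
    intro p q hpq
    have := abs_sub_le_of_dyadic_eq hpq
    rw [abs_mul, show -(j + v + k) = -v + -(j + k) by ring, zpow_add₀ two_ne_zero]
    exact mul_le_mul hv' this (abs_nonneg _) (by positivity)
  -- the coarse data determine both coarse projections
  have hF1 : ∀ p ∈ s, ∀ q ∈ s, projCell cell e0 (j + v + k + m) p =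
      projCell cell e0 (j + v + k + m) q → dyadic (j + k) p.2 = dyadic (j + k) q.2 →
      projCell cell e1 (j + v + k - m) p = projCell cell e1 (j + v + k - m) q := by
    intro p hp q hq hz hy
    exact h.projCell_transfer he0 he1 hm (hs.mem p hp) (hs.mem q hq)
      (h.projCell_nested he0 (by omega) (hs.mem p hp) (hs.mem q hq) hz) (hθs p q hy)
  have hF2 : ∀ p ∈ s, ∀ q ∈ s, projCell cell e1 (j + v + k - m) p =
      projCell cell e1 (j + v + k - m) q → dyadic (j + k) p.2 = dyadic (j + k) q.2 →
      projCell cell e0 (j + v + k - m - m) p = projCell cell e0 (j + v + k - m - m) q := by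
    intro p hp q hq hz hy
    refine h.projCell_transfer he1 he0 hm (hs.mem p hp) (hs.mem q hq) hz ?_
    rw [show e0 - e1 = -θ by rw [hθ]; ring, neg_mul, abs_neg]
    exact (hθs p q hy).trans (zpow_le_zpow_right₀ (by norm_num) (by omega))
  have hscale : ∀ e ∈ F, ∀ (w : ℕ), ∀ p ∈ s, ∀ q ∈ s, projCell cell e (j + v + k + m - w) p =
      projCell cell e (j + v + k + m - w) q →
      |(p.1 + e * p.2) * (2 ^ (j + k + m) / θ) - (q.1 + e * q.2) * (2 ^ (j + k + m) / θ)| ≤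
        2 * (Λ * (1 + B)) * 2 ^ w := by
    intro e he w p hp q hq hpq
    have h1 := h.near_of_eq _ _ _ (h.mem _ (hs.mem p hp).1 _ (hs.mem p hp).2 _ he)
      (h.mem _ (hs.mem q hq).1 _ (hs.mem q hq).2 _ he) hpq
    rw [← sub_mul, abs_mul, abs_div, abs_of_pos (show (0 : ℝ) < 2 ^ (j + k + m) by positivity),
      ← mul_div_assoc, div_le_iff₀ hθ0]
    have e2 : (2 : ℝ) ^ (-(j + v + k + m - w)) * 2 ^ (j + k + m) = 2 * 2 ^ w * 2 ^ (-v - 1) := by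
      rw [← zpow_natCast, ← zpow_add₀ two_ne_zero, ← zpow_one_add₀ two_ne_zero,
        ← zpow_add₀ two_ne_zero]
      congr 1; ring
    calc |p.1 + e * p.2 - (q.1 + e * q.2)| * (2 : ℝ) ^ (j + k + m)
        ≤ Λ * ((1 + B) * 2 ^ (-(j + v + k + m - w))) * 2 ^ (j + k + m) := by gcongr
      _ = Λ * (1 + B) * (2 * 2 ^ w * 2 ^ (-v - 1)) := by rw [← e2]; ring
      _ ≤ Λ * (1 + B) * (2 * 2 ^ w * |θ|) := by gcongr
      _ = _ := by ring
  have hmono3 : ∀ w : ℕ, w ≤ 3 * m →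
      2 * (Λ * (1 + B)) * (2 : ℝ) ^ w ≤ 2 * (Λ * (1 + B)) * 2 ^ (3 * m) := by
    intro w hw
    gcongr
    norm_num
  have key := entropy_cond_le_of_difference s (fun p => dyadic (j + k + m) p.2)
    (projCell cell e0 (j + v + k + m)) (projCell cell e1 (j + v + k + m))
    (fun p => (dyadic (j + k) p.2, projCell cell e1 (j + v + k - m) p))
    (fun p => (p.1 + e0 * p.2) * (2 ^ (j + k + m) / θ))
    (fun p => (p.1 + e1 * p.2) * (2 ^ (j + k + m) / θ))
    (L := 2 * (Λ * (1 + B))) (R := 2 * (Λ * (1 + B)) * 2 ^ (3 * m))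
    (by nlinarith [hpm (3 * m)])
    (by
      intro p _
      have e3 : (p.1 + e1 * p.2) * (2 ^ (j + k + m) / θ) -
          (p.1 + e0 * p.2) * (2 ^ (j + k + m) / θ) = p.2 * 2 ^ (j + k + m) := by
        field_simp
        rw [hθ]; ring
      rw [e3, dyadic, abs_le]
      constructor <;> linarith [Int.floor_le (p.2 * (2 : ℝ) ^ (j + k + m)),
        Int.lt_floor_add_one (p.2 * (2 : ℝ) ^ (j + k + m))])
    (fun p hp q hq hpq => by
      simpa using hscale e0 he0 0 p hp q hq (by simpa using hpq))
    (fun p hp q hq hpq => by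
      simpa using hscale e1 he1 0 p hp q hq (by simpa using hpq))
    (fun p hp q hq hpq => by
      simp only [Prod.mk.injEq] at hpq
      have := hF2 p hp q hq hpq.2 hpq.1
      refine (hscale e0 he0 (3 * m) p hp q hq ?_).trans (hmono3 _ le_rfl)
      convert this using 2 <;> push_cast <;> ring)
    (fun p hp q hq hpq => by
      simp only [Prod.mk.injEq] at hpq
      refine (hscale e1 he1 (2 * m) p hp q hq ?_).trans (hmono3 _ (by omega))
      convert hpq.2 using 2 <;> push_cast <;> ring)
  refine key.trans ?_
  have hby : ∀ i : ℤ, i ≤ j + u → ∀ p ∈ s, ∀ q ∈ s, dyadicSquare (j + u) p =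
      dyadicSquare (j + u) q → dyadic i p.2 = dyadic i q.2 := by
    intro i hi p _ q _ hpq
    simp only [dyadicSquare, Prod.mk.injEq] at hpq
    exact dyadic_nested hi hpq.2
  have i0 := entropy_info_le s (projCell cell e0 (j + v + k + m))
    (projCell cell e0 (j + v + k - m - m)) (dyadicSquare (j + u))
    (fun p => dyadic (j + k + m) p.2) (fun p => dyadic (j + k) p.2)
    (fun p => (dyadic (j + k) p.2, projCell cell e1 (j + v + k - m) p))
    (fun p hp q hq => h.projCell_nested he0 (by omega) (hs.mem p hp) (hs.mem q hq))
    (hby _ (by omega)) (hby _ (by omega))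
    (fun p hp q hq hpq => by
      simp only [Prod.mk.injEq] at hpq
      exact ⟨hpq.1, hF2 p hp q hq hpq.2 hpq.1⟩)
    (fun p hp q hq hX hy => by rw [hF1 p hp q hq hX hy, hy])
  have i1 := entropy_info_le s (projCell cell e1 (j + v + k + m))
    (projCell cell e1 (j + v + k - m)) (dyadicSquare (j + u))
    (fun p => dyadic (j + k + m) p.2) (fun p => dyadic (j + k) p.2)
    (fun p => (dyadic (j + k) p.2, projCell cell e1 (j + v + k - m) p))
    (fun p hp q hq => h.projCell_nested he1 (by omega) (hs.mem p hp) (hs.mem q hq))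
    (hby _ (by omega)) (hby _ (by omega))
    (fun p hp q hq hpq => by
      simpa only [Prod.mk.injEq] using hpq)
    (fun p hp q hq hX hy => by
      rw [h.projCell_nested he1 (by omega) (hs.mem p hp) (hs.mem q hq) hX, hy])
  have := Real.log_nonneg (show (1 : ℝ) ≤ 2 by norm_num)
  gcongr

end Pair

section PairBound
open scoped Classical

variable {F S : Set ℝ} {cell : ℤ → ℝ → Set ℝ} {B Λ C d : ℝ}

theorem exists_zpow_bracket {x : ℝ} (hx : 0 < x) :
    ∃ v : ℤ, (2 : ℝ) ^ (-v - 1) < x ∧ x ≤ 2 ^ (-v) := by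
  obtain ⟨n, h1, h2⟩ := exists_mem_Ioc_zpow hx (show (1 : ℝ) < 2 by norm_num)
  exact ⟨-(n + 1), by rwa [show -(-(n + 1)) - 1 = n by ring], by rwa [neg_neg]⟩

theorem CellSystem.entropy_dyadicSquare_sub_le_infoLoss (h : CellSystem F S cell B Λ C d) {j : ℤ}
    {s : Finset (ℝ × ℝ)} (hs : IsPiece F j s) {m N κ : ℕ} (hm : Λ + 1 ≤ 2 ^ m) (hN : 2 ≤ N)
    {e0 e1 : ℝ} (he0 : e0 ∈ F) (he1 : e1 ∈ F)
    (hθ : (2 : ℝ) ^ (-((κ * (N * m) : ℕ) : ℤ)) ≤ |e1 - e0|)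
    (hθ' : |e1 - e0| ≤ (2 : ℝ) ^ (-((N * m : ℕ) : ℤ))) :
    entropy s (dyadicSquare (j + (N * m : ℕ))) - entropy s (projCell cell e1 (j + (N * m : ℕ))) ≤
      s.card * (N * (Real.log 2 * (6 + 2 * (2 * (Λ * (1 + B))))) +
        (Real.log (2 * (Λ * (1 + B) + B) + 2) + 2 * m * Real.log 2)) +
      (3 * Real.log 2 * (2 * (Λ * (1 + B)) * 2 ^ (3 * m)) ^ 2 + 1) *
        (infoLoss cell s e0 j (N * m) ((1 + κ) * (N * m)) +
          infoLoss cell s e1 j (N * m) ((1 + κ) * (N * m))) := by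
  have hΛ := h.one_le_Λ
  have hB := h.one_le_B
  obtain ⟨v, hv, hv'⟩ := exists_zpow_bracket (lt_of_lt_of_le (by positivity) hθ)
  have hone : (1 : ℝ) < 2 := by norm_num
  have hvu : ((N * m : ℕ) : ℤ) ≤ v := by
    have := (zpow_lt_zpow_iff_right₀ hone).1 (hv.trans_le hθ')
    omega
  have hvκ : v ≤ ((κ * (N * m) : ℕ) : ℤ) := by
    have := (zpow_le_zpow_iff_right₀ hone).1 (hθ.trans hv')
    omega
  have hun : N * m ≤ (1 + κ) * (N * m) := Nat.le_mul_of_pos_left _ (by omega)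
  have hn : (((1 + κ) * (N * m) : ℕ) : ℤ) = (N * m : ℕ) + (κ * (N * m) : ℕ) := by
    push_cast; ring
  have hD0 := h.infoLoss_nonneg he0 hs hun
  have hD1 := h.infoLoss_nonneg he1 hs hun
  set u := N * m with hu
  set n := (1 + κ) * u with hndef
  set b := dyadicSquare (j + u) with hb
  let g : ℝ → ℤ → ℝ := fun e i => entropy s (projCell cell e i) -
    entropy s (fun p => (b p, projCell cell e i p))
  have hg : ∀ e ∈ F, ∀ i i' : ℤ, i ≤ i' → g e i ≤ g e i' := by
    intro e he i i' hi
    have := entropy_cond_antitone s b (projCell cell e i) (projCell cell e i')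
      fun p hp q hq => h.projCell_nested he hi (hs.mem p hp) (hs.mem q hq)
    simp only [g]
    linarith
  have hDe : ∀ e, infoLoss cell s e j u n = g e (j + n) - g e (j + u) := fun e => rfl
  set Y : ℕ → ℝ := fun i => entropy s (fun p => (dyadic (j + (i * m : ℕ)) p.2,
    projCell cell e1 (j + n) p)) with hY
  set R2 : ℝ := (2 * (Λ * (1 + B)) * 2 ^ (3 * m)) ^ 2 with hR2
  have hℓ := Real.log_nonneg hone.le
  have hblock : ∀ t ∈ Finset.range (N - 2), Y (t + 1 + 2) - Y (t + 2) ≤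
      Real.log 2 * (s.card * (6 + 2 * (2 * (Λ * (1 + B)))) + R2 *
        ((g e0 (j + v + ((t + 3) * m : ℕ)) - g e0 (j + v + (t * m : ℕ))) +
         (g e1 (j + v + ((t + 3) * m : ℕ)) - g e1 (j + v + (t * m : ℕ))))) := by
    intro t ht
    have ht' : t + 3 ≤ N := by have := Finset.mem_range.1 ht; omega
    have htm : (t + 3) * m ≤ u := Nat.mul_le_mul_right m ht'
    have hkm : (((t + 2) * m : ℕ) : ℤ) + m = ((t + 3) * m : ℕ) := by push_cast; ring
    have hkm2 : (((t + 2) * m : ℕ) : ℤ) = (t * m : ℕ) + m + m := by push_cast; ring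
    have hmain := h.entropy_dyadic_cond_le hs hm he0 he1 hv hv' (k := ((t + 2) * m : ℕ)) (u := u)
      (by omega)
    have hanti := entropy_cond_antitone s (fun p => dyadic (j + ((t + 2) * m : ℕ) + m) p.2)
      (fun p => (dyadic (j + ((t + 2) * m : ℕ)) p.2,
        projCell cell e1 (j + v + ((t + 2) * m : ℕ) - m) p))
      (fun p => (dyadic (j + ((t + 2) * m : ℕ)) p.2, projCell cell e1 (j + n) p))
      (fun p hp q hq hpq => by
        simp only [Prod.mk.injEq] at hpq ⊢
        exact ⟨hpq.1, h.projCell_nested he1 (by omega) (hs.mem p hp) (hs.mem q hq) hpq.2⟩)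
    have hY1 : Y (t + 1 + 2) = entropy s (fun p => (dyadic (j + ((t + 2) * m : ℕ) + m) p.2,
        (dyadic (j + ((t + 2) * m : ℕ)) p.2, projCell cell e1 (j + n) p))) := by
      simp only [hY]
      refine entropy_congr fun p hp q hq => ?_
      have e4 : j + ((t + 1 + 2) * m : ℕ) = j + ((t + 2) * m : ℕ) + m := by push_cast; ring
      rw [e4]
      have := @dyadic_nested (j + ((t + 2) * m : ℕ)) (j + ((t + 2) * m : ℕ) + m) (by omega) p.2 q.2
      simp only [Prod.mk.injEq]
      tauto
    have hg1 := hg e1 he1 (j + v + (t * m : ℕ)) (j + v + ((t + 2) * m : ℕ) - m) (by omega)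
    rw [hY1]
    refine (hanti.trans hmain).trans ?_
    have e5 : j + v + ((t + 2) * m : ℕ) + m = j + v + ((t + 3) * m : ℕ) := by omega
    have e6 : j + v + ((t + 2) * m : ℕ) - m - m = j + v + (t * m : ℕ) := by omega
    rw [e5, e6]
    have hR20 : 0 ≤ R2 := by positivity
    refine mul_le_mul_of_nonneg_left (add_le_add le_rfl (mul_le_mul_of_nonneg_left
      (add_le_add le_rfl ?_) hR20)) hℓ
    simp only [g] at hg1 ⊢
    linarith
  have hsum := Finset.sum_le_sum hblock
  rw [Finset.sum_range_sub (fun t => Y (t + 2)), ← Finset.mul_sum, Finset.sum_add_distrib,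
    Finset.sum_const, Finset.card_range, nsmul_eq_mul, ← Finset.mul_sum,
    Finset.sum_add_distrib, show N - 2 + 2 = N by omega, zero_add] at hsum
  have hshift : ∀ e ∈ F, ∑ t ∈ Finset.range (N - 2),
      (g e (j + v + ((t + 3) * m : ℕ)) - g e (j + v + (t * m : ℕ))) ≤
      3 * infoLoss cell s e j u n := by
    intro e he
    have h1 := sum_range_shift_three_le (g := fun t : ℕ => g e (j + v + (t * m : ℕ)))
      (fun a c hac => hg e he _ _ (by
        have := Nat.mul_le_mul_right m hac
        omega)) (N - 2)
    refine h1.trans ?_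
    rw [hDe, show N - 2 + 2 = N by omega]
    have h2 := hg e he (j + v + (N * m : ℕ)) (j + n) (by omega)
    have h3 := hg e he (j + u) (j + v + (0 * m : ℕ)) (by simp; omega)
    linarith
  have hs0 := hshift e0 he0
  have hs1 := hshift e1 he1
  -- the coarse part of the second coordinate
  have hcoarse : Y 2 - entropy s (projCell cell e1 (j + n)) ≤
      s.card * Real.log (2 ^ (2 * m)) := by
    refine entropy_pair_sub_le s _ _ _ fun c => ?_
    refine le_trans (le_of_eq ?_) (card_image_dyadic_le
      (s.filter fun p => projCell cell e1 (j + n) p = c) (fun p => p.2) j (2 * m) ?_)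
    · congr!
    · intro p hp q hq
      have := hs.eq p (Finset.mem_filter.1 hp).1 q (Finset.mem_filter.1 hq).1
      simp only [dyadicSquare, Prod.mk.injEq] at this
      exact this.2
  rw [Real.log_pow] at hcoarse
  -- the first coordinate is determined up to boundedly many choices
  have hfirst : entropy s (fun p => (b p, projCell cell e1 (j + n) p)) - Y N ≤
      s.card * Real.log (2 * (Λ * (1 + B) + B) + 2) := by
    have e7 : entropy s (fun p => (b p, projCell cell e1 (j + n) p)) =
        entropy s (fun p => (dyadic (j + u) p.1,
          (dyadic (j + u) p.2, projCell cell e1 (j + n) p))) :=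
      entropy_congr fun p _ q _ => by
        simp only [hb, dyadicSquare, Prod.mk.injEq]; tauto
    rw [e7]
    refine entropy_pair_sub_le s _ _ _ fun c => ?_
    refine le_trans (le_of_eq ?_) (card_image_dyadic_le_of_abs_sub_le
      (s.filter fun p => (dyadic (j + u) p.2, projCell cell e1 (j + n) p) = c) (fun p => p.1)
      (j + u) (D := Λ * (1 + B) + B) (by positivity) ?_)
    · congr!
    · intro p hp q hq
      obtain ⟨hp, hpc⟩ := Finset.mem_filter.1 hp
      obtain ⟨hq, hqc⟩ := Finset.mem_filter.1 hq
      have hpq := hpc.trans hqc.symm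
      simp only [Prod.mk.injEq] at hpq
      have h1 := h.near_of_eq _ _ _ (h.mem _ (hs.mem p hp).1 _ (hs.mem p hp).2 _ he1)
        (h.mem _ (hs.mem q hq).1 _ (hs.mem q hq).2 _ he1) hpq.2
      have h2 := abs_sub_le_of_dyadic_eq hpq.1
      have h3 : (2 : ℝ) ^ (-(j + (n : ℤ))) ≤ 2 ^ (-(j + (u : ℤ))) :=
        zpow_le_zpow_right₀ hone.le (by omega)
      have h4 : |e1 * (p.2 - q.2)| ≤ B * 2 ^ (-(j + (u : ℤ))) := by
        rw [abs_mul]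
        exact mul_le_mul (h.bound e1 he1) h2 (abs_nonneg _) (by linarith)
      calc |p.1 - q.1| = |(p.1 + e1 * p.2 - (q.1 + e1 * q.2)) - e1 * (p.2 - q.2)| := by ring_nf
        _ ≤ Λ * ((1 + B) * 2 ^ (-(j + (n : ℤ)))) + B * 2 ^ (-(j + (u : ℤ))) :=
          (abs_sub _ _).trans (add_le_add h1 h4)
        _ ≤ Λ * ((1 + B) * 2 ^ (-(j + (u : ℤ)))) + B * 2 ^ (-(j + (u : ℤ))) := by gcongr
        _ = _ := by ring
  have hbu : entropy s (fun p => (b p, projCell cell e1 (j + u) p)) = entropy s b :=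
    entropy_congr fun p hp q hq => by
      have := @CellSystem.projCell_eq_of_dyadicSquare_eq F S cell B Λ C d h e1 he1 (j + u) p q
        (hs.mem p hp) (hs.mem q hq)
      simp only [Prod.mk.injEq]
      tauto
  have hD1' := hDe e1
  simp only [g, hbu] at hD1'
  have hNcast : ((N - 2 : ℕ) : ℝ) ≤ N := by exact_mod_cast Nat.sub_le N 2
  have hR20 : 0 ≤ R2 := by positivity
  have hL0 : 0 ≤ (s.card : ℝ) * (6 + 2 * (2 * (Λ * (1 + B)))) := by positivity
  have hfin : Real.log 2 * (((N - 2 : ℕ) : ℝ) * (s.card * (6 + 2 * (2 * (Λ * (1 + B))))) + R2 *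
      (∑ t ∈ Finset.range (N - 2),
          (g e0 (j + v + ((t + 3) * m : ℕ)) - g e0 (j + v + (t * m : ℕ))) +
        ∑ t ∈ Finset.range (N - 2),
          (g e1 (j + v + ((t + 3) * m : ℕ)) - g e1 (j + v + (t * m : ℕ))))) ≤
      Real.log 2 * ((N : ℝ) * (s.card * (6 + 2 * (2 * (Λ * (1 + B))))) + R2 *
        (3 * infoLoss cell s e0 j u n + 3 * infoLoss cell s e1 j u n)) := by
    gcongr
  have hall := hsum.trans hfin
  push_cast at hcoarse
  nlinarith
end PairBound

section Gain
open scoped Classical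

theorem sum_entropy_cond_ge {Ω ι β γ δ : Type*} [Fintype ι] (s : Finset Ω) (A : Ω → β)
    (Z : ι → Ω → γ) (Q : Ω → δ) (k c : ℝ)
    (hA : ∀ a, c * ((s.filter fun p => A p = a).card : ℝ) ≤
      ∑ σ, (entropy (s.filter fun p => A p = a) (Z σ) -
        entropy (s.filter fun p => A p = a) (fun _ => ())) -
      k * (entropy (s.filter fun p => A p = a) Q -
        entropy (s.filter fun p => A p = a) (fun _ => ()))) :
    c * s.card ≤ ∑ σ, (entropy s (fun p => (Z σ p, A p)) - entropy s A) -
      k * (entropy s (fun p => (Q p, A p)) - entropy s A) := by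
  simp only [entropy_pair_eq_sum s _ A]
  rw [entropy_eq_sum_const s A, card_eq_sum_filter s A]
  simp only [← Finset.sum_sub_distrib]
  rw [Finset.sum_comm, Finset.mul_sum, Finset.mul_sum, ← Finset.sum_sub_distrib]
  exact Finset.sum_le_sum fun a _ => hA a

theorem entropy_const_le {Ω α : Type*} (s : Finset Ω) (g : Ω → α) :
    entropy s (fun _ => ()) ≤ entropy s g :=
  entropy_mono fun _ _ _ _ _ => rfl

theorem entropy_sub_const_le_log_card {Ω α : Type*} (s : Finset Ω) (g : Ω → α) {N : ℝ}
    (hN : ((s.image g).card : ℝ) ≤ N) :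
    entropy s g - entropy s (fun _ => ()) ≤ s.card * Real.log N := by
  have h1 : entropy s g = entropy s (fun p => (g p, ())) :=
    entropy_congr fun p _ q _ => by simp
  rw [h1]
  refine entropy_pair_sub_le s g _ N fun b => ?_
  simpa using hN

theorem entropy_eq_zero_of_injOn {Ω α : Type*} {s : Finset Ω} {g : Ω → α} (hg : InjOn g s) :
    entropy s g = 0 := by
  unfold entropy
  rw [neg_eq_zero]
  refine Finset.sum_eq_zero fun p hp => ?_
  have : (s.filter fun y => g y = g p) = {p} := by
    ext y
    simp only [Finset.mem_filter, Finset.mem_singleton]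
    exact ⟨fun h => hg h.1 hp h.2, fun h => ⟨h ▸ hp, by rw [h]⟩⟩
  rw [fiberCard, this, Finset.card_singleton, Nat.cast_one, Real.log_one]

theorem IsPiece.of_forall_eq {F : Set ℝ} {j i : ℤ} {s t : Finset (ℝ × ℝ)} (hs : IsPiece F j s)
    {a : ℤ × ℤ} (ht : ∀ p ∈ t, p ∈ s ∧ dyadicSquare i p = a) : IsPiece F i t :=
  ⟨fun p hp => hs.mem p (ht p hp).1, fun p hp q hq => (ht p hp).2.trans (ht q hq).2.symm⟩

variable {ι : Type*} [Fintype ι]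
variable {F S : Set ℝ} {cell : ℤ → ℝ → Set ℝ} {B Λ C d : ℝ}

/-- The total entropy of the projections of a finite set at relative scale `n`, minus `K` times
the entropy of the set itself for each projection. -/
def projGain (cell : ℤ → ℝ → Set ℝ) (e : ι → ℝ) (K : ℝ) (j : ℤ) (n : ℕ)
    (s : Finset (ℝ × ℝ)) : ℝ :=
  ∑ σ, (entropy s (projCell cell (e σ) (j + n)) - entropy s (fun _ => ())) -
    Fintype.card ι * K * (entropy s (dyadicSquare (j + n)) - entropy s (fun _ => ()))

/-- A uniform lower bound `c` for the normalised gain of all pieces at relative scale `n`. -/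
def HasGain (F : Set ℝ) (cell : ℤ → ℝ → Set ℝ) (e : ι → ℝ) (K : ℝ) (n : ℕ) (c : ℝ) : Prop :=
  ∀ (j : ℤ) (s : Finset (ℝ × ℝ)), IsPiece F j s →
    Fintype.card ι * c * n * s.card ≤ projGain cell e K j n s

theorem CellSystem.projGain_add_ge (h : CellSystem F S cell B Λ C d) {e : ι → ℝ}
    (he : ∀ σ, e σ ∈ F) {K c : ℝ} {u n : ℕ} (hn : HasGain F cell e K n c) {j : ℤ}
    {s : Finset (ℝ × ℝ)} (hs : IsPiece F j s) :
    projGain cell e K j u s + Fintype.card ι * c * n * s.card +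
      ∑ σ, infoLoss cell s (e σ) j u (u + n) ≤ projGain cell e K j (u + n) s := by
  have hj : j + ((u + n : ℕ) : ℤ) = j + u + n := by push_cast; ring
  have h1 := sum_entropy_cond_ge s (dyadicSquare (j + u))
    (fun σ => projCell cell (e σ) (j + u + n)) (dyadicSquare (j + u + n))
    (Fintype.card ι * K) (Fintype.card ι * c * n) fun a =>
      hn (j + u) _ (hs.of_forall_eq fun p hp => by
        simpa only [Finset.mem_filter] using hp)
  have h2 : entropy s (fun p => (dyadicSquare (j + u + n) p, dyadicSquare (j + u) p)) =
      entropy s (dyadicSquare (j + u + n)) :=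
    entropy_congr fun p _ q _ => by
      have := @dyadicSquare_nested (j + u) (j + u + n) (by omega) p q
      exact ⟨fun hpq => Prod.ext hpq (this hpq), fun hpq => congrArg Prod.fst hpq⟩
  have h3 : ∀ σ, entropy s (projCell cell (e σ) (j + u + n)) - entropy s (fun _ => ()) =
      (entropy s (fun p => (projCell cell (e σ) (j + u + n) p, dyadicSquare (j + u) p)) -
        entropy s (dyadicSquare (j + u))) +
      (entropy s (projCell cell (e σ) (j + u)) - entropy s (fun _ => ())) +
      infoLoss cell s (e σ) j u (u + n) := by
    intro σ
    have e1 : entropy s (fun p => (projCell cell (e σ) (j + u + n) p, dyadicSquare (j + u) p)) =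
        entropy s (fun p => (dyadicSquare (j + u) p, projCell cell (e σ) (j + u + n) p)) :=
      entropy_congr fun p _ q _ => by simp only [Prod.mk.injEq]; tauto
    have e2 : entropy s (fun p => (dyadicSquare (j + u) p, projCell cell (e σ) (j + u) p)) =
        entropy s (dyadicSquare (j + u)) :=
      entropy_congr fun p hp q hq => by
        have := @CellSystem.projCell_eq_of_dyadicSquare_eq F S cell B Λ C d h (e σ) (he σ)
          (j + u) p q (hs.mem p hp) (hs.mem q hq)
        exact ⟨fun hpq => Prod.ext hpq (this hpq), fun hpq => congrArg Prod.fst hpq⟩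
    rw [infoLoss, hj, e1, e2]
    ring
  rw [h2] at h1
  unfold projGain
  rw [hj, Finset.sum_congr rfl fun σ _ => h3 σ, Finset.sum_add_distrib, Finset.sum_add_distrib]
  linarith

theorem CellSystem.hasGain_mul (h : CellSystem F S cell B Λ C d) {e : ι → ℝ}
    (he : ∀ σ, e σ ∈ F) {K c : ℝ} {n : ℕ} (hn : HasGain F cell e K n c) (k : ℕ) :
    HasGain F cell e K ((k + 1) * n) c := by
  induction k with
  | zero => simpa using hn
  | succ k ih =>
    intro j s hs
    have h1 := h.projGain_add_ge he hn (u := (k + 1) * n) hs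
    have h2 := ih j s hs
    have h3 : 0 ≤ ∑ σ, infoLoss cell s (e σ) j ((k + 1) * n) ((k + 1) * n + n) :=
      Finset.sum_nonneg fun σ _ => h.infoLoss_nonneg (he σ) hs (by omega)
    rw [show (k + 1 + 1) * n = (k + 1) * n + n by ring]
    push_cast at h2 ⊢
    linarith

theorem entropy_dyadicSquare_sub_le {s : Finset (ℝ × ℝ)} (hs : ∀ p ∈ s, p.1 ∈ F ∧ p.2 ∈ F)
    (i : ℤ) (n : ℕ) {N : ℝ}
    (hN : ∀ (T : Finset (ℝ × ℝ)) (f : ℝ × ℝ → ℝ), (∀ p ∈ T, f p ∈ F) →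
      (∀ p ∈ T, ∀ q ∈ T, dyadic i (f p) = dyadic i (f q)) →
      ((T.image fun p => dyadic (i + n) (f p)).card : ℝ) ≤ N) :
    entropy s (dyadicSquare (i + n)) - entropy s (dyadicSquare i) ≤
      2 * (s.card * Real.log N) := by
  have h1 := entropy_pair_sub_le s (fun p => dyadic (i + n) p.1) (dyadicSquare i) N fun b => by
    refine le_trans (le_of_eq ?_) (hN (s.filter fun p => dyadicSquare i p = b) (fun p => p.1)
      (fun p hp => (hs p (Finset.mem_filter.1 hp).1).1) fun p hp q hq => ?_)
    · congr!
    · exact congrArg Prod.fst ((Finset.mem_filter.1 hp).2.trans (Finset.mem_filter.1 hq).2.symm)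
  have h2 := entropy_pair_sub_le s (fun p => dyadic (i + n) p.2)
    (fun p => (dyadic (i + n) p.1, dyadicSquare i p)) N fun b => by
    refine le_trans (le_of_eq ?_) (hN (s.filter fun p => (dyadic (i + n) p.1, dyadicSquare i p) = b)
      (fun p => p.2) (fun p hp => (hs p (Finset.mem_filter.1 hp).1).2) fun p hp q hq => ?_)
    · congr!
    · exact congrArg (fun x => x.2.2)
        ((Finset.mem_filter.1 hp).2.trans (Finset.mem_filter.1 hq).2.symm)
  have h3 : entropy s (dyadicSquare (i + n)) ≤
      entropy s (fun p => (dyadic (i + n) p.2, (dyadic (i + n) p.1, dyadicSquare i p))) :=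
    entropy_mono fun p _ q _ hpq => by
      simp only [dyadicSquare, Prod.mk.injEq] at hpq ⊢
      tauto
  linarith

theorem IsPiece.entropy_dyadicSquare_eq {j : ℤ} {s : Finset (ℝ × ℝ)} (hs : IsPiece F j s) :
    entropy s (dyadicSquare j) = entropy s (fun _ => ()) :=
  entropy_congr fun p hp q hq => by simp [hs.eq p hp q hq]

theorem hasGain_trivial (e : ι → ℝ) {K : ℝ} (hK : 0 ≤ K) (n : ℕ) :
    HasGain F cell e K n (-(2 * K * Real.log 2)) := by
  intro j s hs
  have h1 := entropy_dyadicSquare_sub_le hs.mem j n (N := 2 ^ n) fun T f _ hT =>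
    le_trans (le_of_eq (by congr!)) (card_image_dyadic_le T f j n hT)
  rw [hs.entropy_dyadicSquare_eq, Real.log_pow] at h1
  have h2 : 0 ≤ ∑ σ, (entropy s (projCell cell (e σ) (j + n)) - entropy s (fun _ => ())) :=
    Finset.sum_nonneg fun σ _ => sub_nonneg.2 (entropy_const_le _ _)
  have h3 : Fintype.card ι * K * (entropy s (dyadicSquare (j + n)) - entropy s (fun _ => ())) ≤
    Fintype.card ι * K * (2 * (s.card * (n * Real.log 2))) := by gcongr
  unfold projGain
  linarith

theorem CellSystem.entropy_projCell_sub_const_le (h : CellSystem F S cell B Λ C d) {e : ℝ}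
    (he : e ∈ F) {j : ℤ} {s : Finset (ℝ × ℝ)} (hs : IsPiece F j s) (n : ℕ) :
    entropy s (projCell cell e (j + n)) - entropy s (fun _ => ()) ≤
      s.card * (Real.log C + d * n * Real.log 2) := by
  have h1 := h.card_le s (fun p => p.1 + e * p.2) j n
    (fun p hp => h.mem _ (hs.mem p hp).1 _ (hs.mem p hp).2 _ he) fun p hp q hq =>
      h.projCell_eq_of_dyadicSquare_eq he (hs.mem p hp) (hs.mem q hq) (hs.eq p hp q hq)
  have h2 := entropy_sub_const_le_log_card s (projCell cell e (j + n)) h1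
  have hC : C ≠ 0 := by linarith [h.one_le_C]
  rwa [Real.log_mul hC (by positivity), Real.log_rpow two_pos] at h2

theorem CellSystem.gain_le_of_lt_assouadDim [Nonempty ι] (h : CellSystem F S cell B Λ C d)
    {e : ι → ℝ} (he : ∀ σ, e σ ∈ F) {K c t : ℝ} (hK : 0 ≤ K) (ht0 : 0 ≤ t) (ht : t < assouadDim F)
    {n : ℕ} (hn1 : 1 ≤ n) (hnC : Real.log C ≤ n * Real.log 2) (hn : HasGain F cell e K n c) :
    c ≤ (d + 1) * Real.log 2 - 2 * K * t * Real.log 2 := by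
  obtain ⟨j, T, hTF, hTj, hinj, hcard⟩ := exists_regular_of_lt_assouadDim ht0 ht hn1
  have hs : IsPiece F j (T ×ˢ T) := by
    refine ⟨fun p hp => ?_, fun p hp q hq => ?_⟩
    · exact ⟨hTF (Finset.mem_product.1 hp).1, hTF (Finset.mem_product.1 hp).2⟩
    · have hp := Finset.mem_product.1 hp
      have hq := Finset.mem_product.1 hq
      simp only [dyadicSquare, Prod.mk.injEq]
      exact ⟨hTj _ hp.1 _ hq.1, hTj _ hp.2 _ hq.2⟩
  have hTpos : (0 : ℝ) < T.card := lt_of_lt_of_le (by positivity) hcard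
  have hlogT : t * n * Real.log 2 ≤ Real.log T.card := by
    rw [← Real.log_rpow two_pos]
    exact Real.log_le_log (by positivity) hcard
  have hM : ((T ×ˢ T).card : ℝ) = T.card * T.card := by rw [Finset.card_product]; push_cast; rfl
  have hMpos : (0 : ℝ) < ((T ×ˢ T).card : ℝ) := by rw [hM]; positivity
  have hQ : entropy (T ×ˢ T) (dyadicSquare (j + n)) = 0 := by
    refine entropy_eq_zero_of_injOn fun p hp q hq hpq => ?_
    have hp := Finset.mem_product.1 (Finset.mem_coe.1 hp)
    have hq := Finset.mem_product.1 (Finset.mem_coe.1 hq)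
    simp only [dyadicSquare, Prod.mk.injEq] at hpq
    exact Prod.ext (hinj hp.1 hq.1 hpq.1) (hinj hp.2 hq.2 hpq.2)
  have hgain := hn j (T ×ˢ T) hs
  unfold projGain at hgain
  rw [hQ, entropy_const, hM, Real.log_mul hTpos.ne' hTpos.ne', ← hM] at hgain
  set M : ℝ := ((T ×ˢ T).card : ℝ) with hMdef
  have hι : (0 : ℝ) < Fintype.card ι := by exact_mod_cast Fintype.card_pos
  have hZ : ∑ σ, (entropy (T ×ˢ T) (projCell cell (e σ) (j + n)) -
      -(M * (Real.log T.card + Real.log T.card))) ≤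
      Fintype.card ι * (M * ((d + 1) * n * Real.log 2)) := by
    refine (Finset.sum_le_card_nsmul Finset.univ _ (M * ((d + 1) * n * Real.log 2))
      fun σ _ => ?_).trans_eq (by rw [nsmul_eq_mul, Finset.card_univ])
    have h1 := h.entropy_projCell_sub_const_le (he σ) hs n
    rw [entropy_const, ← hMdef, hM, Real.log_mul hTpos.ne' hTpos.ne', ← hM] at h1
    refine h1.trans (mul_le_mul_of_nonneg_left ?_ hMpos.le)
    linarith
  have hKQ : Fintype.card ι * K * (M * (t * n * Real.log 2 + t * n * Real.log 2)) ≤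
      Fintype.card ι * K * (M * (Real.log T.card + Real.log T.card)) := by gcongr
  have hfin : Fintype.card ι * n * M * c ≤ Fintype.card ι * n * M *
      ((d + 1) * Real.log 2 - 2 * K * t * Real.log 2) := by linarith
  have hn0 : (0 : ℝ) < n := by exact_mod_cast hn1
  exact le_of_mul_le_mul_left hfin (by positivity)

end Gain

section GainStep
open scoped Classical

variable {ι : Type*} [Fintype ι]
variable {F S : Set ℝ} {cell : ℤ → ℝ → Set ℝ} {B Λ C d : ℝ}

theorem CellSystem.hasGain_step [Nonempty ι] (h : CellSystem F S cell B Λ C d)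
    {e : ι → ℝ} (he : ∀ σ, e σ ∈ F) (φ : ι ≃ ι) {K c ε t t' C' : ℝ} (hK : 0 < K) (hC' : 1 ≤ C')
    (hF : ∀ (T : Finset (ℝ × ℝ)) (f : ℝ × ℝ → ℝ) (i : ℤ) (n : ℕ), (∀ p ∈ T, f p ∈ F) →
      (∀ p ∈ T, ∀ q ∈ T, dyadic i (f p) = dyadic i (f q)) →
      ((T.image fun p => dyadic (i + n) (f p)).card : ℝ) ≤ C' * 2 ^ (t' * n))
    {m N κ : ℕ} (hm : Λ + 1 ≤ 2 ^ m) (hN : 2 ≤ N) (hκ : 1 ≤ κ)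
    (hθ : ∀ σ, (2 : ℝ) ^ (-((κ * (N * m) : ℕ) : ℤ)) ≤ |e σ - e (φ σ)|)
    (hθ' : ∀ σ, |e σ - e (φ σ)| ≤ (2 : ℝ) ^ (-((N * m : ℕ) : ℤ)))
    (hc : c ≤ (d + 1) * Real.log 2 - 2 * K * t * Real.log 2)
    (hnum : N * (Real.log 2 * (6 + 2 * (2 * (Λ * (1 + B))))) +
        (Real.log (2 * (Λ * (1 + B) + B) + 2) + 2 * m * Real.log 2) +
        2 * Real.log C' + Real.log C <
      (N * m) * ((2 * t - d) * Real.log 2 - 2 * (t' - t) * κ * Real.log 2 -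
        (1 + κ) * ((d + 1) * Real.log 2 + ε) / K -
        2 * (3 * Real.log 2 * (2 * (Λ * (1 + B)) * 2 ^ (3 * m)) ^ 2 + 1) * ε * (1 + κ)))
    (hgain : HasGain F cell e K (N * m) c) : HasGain F cell e K ((1 + κ) * (N * m)) (c + ε) := by
  intro j s hs
  by_contra! hlt
  set u := N * m with hu
  set P := 3 * Real.log 2 * (2 * (Λ * (1 + B)) * 2 ^ (3 * m)) ^ 2 + 1 with hP
  have hℓ := Real.log_nonneg (show (1 : ℝ) ≤ 2 by norm_num)
  have hι : (0 : ℝ) < Fintype.card ι := by exact_mod_cast Fintype.card_pos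
  have hM : (0 : ℝ) < s.card := by
    rcases s.eq_empty_or_nonempty with rfl | hne
    · simp [projGain, entropy] at hlt
    · exact_mod_cast hne.card_pos
  obtain ⟨k, rfl⟩ : ∃ k, κ = k + 1 := ⟨κ - 1, by omega⟩
  have hn : (1 + (k + 1)) * u = u + (k + 1) * u := by ring
  have hadd := h.projGain_add_ge he (h.hasGain_mul he hgain k) (u := u) hs
  have hbase := hgain j s hs
  rw [← hn] at hadd
  set D : ι → ℝ := fun σ => infoLoss cell s (e σ) j u ((1 + (k + 1)) * u) with hD
  have hncast : (((1 + (k + 1)) * u : ℕ) : ℝ) = u + ((k + 1 : ℕ) * u : ℕ) := by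
    rw [hn]; push_cast; ring
  have hDsum : ∑ σ, D σ < Fintype.card ι * (ε * ((1 + (k + 1)) * u : ℕ) * s.card) := by
    have : (Fintype.card ι : ℝ) * c * u * s.card + Fintype.card ι * c * ((k + 1 : ℕ) * u : ℕ) *
        s.card + ∑ σ, D σ < Fintype.card ι * (c + ε) * ((1 + (k + 1)) * u : ℕ) * s.card := by
      linarith
    rw [hncast] at this ⊢
    linarith
  obtain ⟨σ, -, hσ⟩ : ∃ σ ∈ (Finset.univ : Finset ι), D (φ σ) + D σ ≤
      2 * (ε * ((1 + (k + 1)) * u : ℕ) * s.card) := by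
    refine Finset.exists_le_of_sum_le Finset.univ_nonempty ?_
    rw [Finset.sum_add_distrib, Equiv.sum_comp φ D, Finset.sum_const, Finset.card_univ,
      nsmul_eq_mul]
    linarith
  have hpair : entropy s (dyadicSquare (j + u)) - entropy s (projCell cell (e σ) (j + u)) ≤
      s.card * (N * (Real.log 2 * (6 + 2 * (2 * (Λ * (1 + B))))) +
        (Real.log (2 * (Λ * (1 + B) + B) + 2) + 2 * m * Real.log 2)) + P * (D (φ σ) + D σ) :=
    h.entropy_dyadicSquare_sub_le_infoLoss hs hm hN (he (φ σ)) (he σ) (hθ σ) (hθ' σ)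
  have hPpos : 0 ≤ P := by positivity
  have hPD : P * (D (φ σ) + D σ) ≤ P * (2 * (ε * ((1 + (k + 1)) * u : ℕ) * s.card)) := by gcongr
  have hZ := h.entropy_projCell_sub_const_le (he σ) hs u
  have hQ := entropy_dyadicSquare_sub_le hs.mem (j + u) ((k + 1) * u)
    (N := C' * 2 ^ (t' * (((k + 1) * u : ℕ) : ℝ)))
    fun T f hf hT => hF T f (j + u) ((k + 1) * u) hf hT
  rw [Real.log_mul (by linarith) (by positivity), Real.log_rpow two_pos,
    show j + u + (((k + 1) * u : ℕ) : ℤ) = j + (((1 + (k + 1)) * u : ℕ) : ℤ) by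
      rw [hn]; push_cast; ring] at hQ
  -- the set itself must have large entropy
  have hbig : (2 * K * t * Real.log 2 - (d + 1) * Real.log 2 - ε) *
      ((1 + (k + 1)) * u : ℕ) * s.card ≤
      K * (entropy s (dyadicSquare (j + ((1 + (k + 1)) * u : ℕ))) - entropy s (fun _ => ())) := by
    have h2 : 0 ≤ ∑ σ, (entropy s (projCell cell (e σ) (j + ((1 + (k + 1)) * u : ℕ))) -
        entropy s (fun _ => ())) :=
      Finset.sum_nonneg fun σ _ => sub_nonneg.2 (entropy_const_le _ _)
    unfold projGain at hlt
    have h3 : Fintype.card ι * (-((c + ε) * ((1 + (k + 1)) * u : ℕ) * s.card)) ≤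
        Fintype.card ι * (K * (entropy s (dyadicSquare (j + ((1 + (k + 1)) * u : ℕ))) -
          entropy s (fun _ => ()))) := by linarith
    refine le_trans ?_ (le_of_mul_le_mul_left h3 hι)
    have h4 : 2 * K * t * Real.log 2 - (d + 1) * Real.log 2 - ε ≤ -(c + ε) := by linarith
    have h5 : (0 : ℝ) ≤ ((1 + (k + 1)) * u : ℕ) * s.card := by positivity
    linarith [mul_le_mul_of_nonneg_right h4 h5]
  have hbig' : (2 * t * Real.log 2 - ((d + 1) * Real.log 2 + ε) / K) *
      ((1 + (k + 1)) * u : ℕ) * s.card ≤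
      entropy s (dyadicSquare (j + ((1 + (k + 1)) * u : ℕ))) - entropy s (fun _ => ()) := by
    refine le_of_mul_le_mul_left (le_trans (le_of_eq ?_) hbig) hK
    field_simp
    ring
  have hnum' := mul_lt_mul_of_pos_left hnum hM
  have hucast : (u : ℝ) = N * m := by rw [hu]; push_cast; rfl
  rw [← hucast] at hnum'
  push_cast at *
  have e1 : (1 + ((k : ℝ) + 1)) * ((d + 1) * Real.log 2 + ε) / K =
    (1 + ((k : ℝ) + 1)) * (((d + 1) * Real.log 2 + ε) / K) := by ring
  rw [e1] at hnum'
  have hfin : (s.card : ℝ) * (u * ((2 * t - d) * Real.log 2 -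
      2 * (t' - t) * (k + 1) * Real.log 2 -
        (1 + ((k : ℝ) + 1)) * (((d + 1) * Real.log 2 + ε) / K) -
        2 * P * ε * (1 + ((k : ℝ) + 1)))) ≤
      s.card * (N * (Real.log 2 * (6 + 2 * (2 * (Λ * (1 + B))))) +
        (Real.log (2 * (Λ * (1 + B) + B) + 2) + 2 * m * Real.log 2) +
        2 * Real.log C' + Real.log C) := by
    linarith
  linarith

end GainStep

section Contradiction
open scoped Classical

variable {F S : Set ℝ} {cell : ℤ → ℝ → Set ℝ} {B Λ C d : ℝ}

theorem exists_cellSystem (hd0 : 0 ≤ d) (hd1 : d < 1) (hC : 0 < C) (hS : CoverBound S d C)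
    (hB1 : 1 ≤ B) (hB : ∀ x ∈ F, |x| ≤ B)
    (hmem : ∀ a ∈ F, ∀ a' ∈ F, ∀ e ∈ F, a + e * a' ∈ S) :
    ∃ (cell : ℤ → ℝ → Set ℝ) (Λ C' : ℝ), CellSystem F S cell B Λ C' d := by
  have hb : 0 < 1 + B := by linarith
  obtain ⟨Λ, hΛ1, hΛ⟩ := exists_chainCell_diam_bound hd1 hC hS hb
  refine ⟨chainCell S (1 + B), Λ, max 1 (C * (2 * Λ) ^ d), hB1, hB, hmem, hΛ1, le_max_left _ _, hd0,
    fun i z z' hz hz' h => chainCell_eq_of_abs_sub_le hb.le hz hz' h,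
    fun i i' z z' hi _ hz' h => chainCell_nested hb.le hi hz' h, hΛ, fun T f i n hf hT => ?_⟩
  refine le_trans (le_of_eq ?_) ((card_image_chainCell_le hC hS hb hΛ1 hΛ T f hf i n hT).trans
    (mul_le_mul_of_nonneg_right (le_max_right _ _) (by positivity)))
  congr!

theorem involutive_flip {I : ℕ} (i : Fin I) :
    Function.Involutive fun σ : Fin I → Bool => Function.update σ i (!σ i) := by
  intro σ
  simp

/-- The dyadic scales of a separated tree give an unbounded gain as soon as every one of them
improves the gain by `ε`. -/
theorem CellSystem.hasGain_of_tree {I : ℕ} (h : CellSystem F S cell B Λ C d)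
    {e : (Fin I → Bool) → ℝ} (he : ∀ σ, e σ ∈ F) {K c ε : ℝ} {κ : ℕ} {w : ℕ → ℕ}
    (hw : ∀ i, 1 ≤ w i) (hdvd : ∀ i, (1 + κ) * w i ∣ w (i + 1))
    (h0 : HasGain F cell e K (w 0) c)
    (hstep : ∀ (i : Fin I) (c' : ℝ), HasGain F cell e K (w i) c' →
      HasGain F cell e K ((1 + κ) * w i) (c' + ε)) :
    ∀ i ≤ I, HasGain F cell e K (w i) (c + i * ε) := by
  intro i
  induction i with
  | zero => intro _; simpa using h0
  | succ i ih =>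
    intro hi
    have h1 := hstep ⟨i, hi⟩ _ (ih (by omega))
    obtain ⟨k, hk⟩ := hdvd i
    obtain ⟨k, rfl⟩ : ∃ k', k = k' + 1 := by
      refine ⟨k - 1, ?_⟩
      have := hw (i + 1)
      rcases k with _ | k
      · simp at hk; omega
      · rfl
    have h2 := h.hasGain_mul he h1 k
    rw [hk, mul_comm]
    convert h2 using 1
    push_cast
    ring

theorem CellSystem.two_mul_assouadDim_le (h : CellSystem F S cell B Λ C d) (hH : 0 < dimH F) :
    2 * assouadDim F ≤ d := by
  by_contra! hlt
  set s := assouadDim F with hs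
  have hd0 := h.d_nonneg
  have hΛ := h.one_le_Λ
  have hB := h.one_le_B
  have hℓ : 0 < Real.log 2 := Real.log_pos (by norm_num)
  set ℓ := Real.log 2 with hℓdef
  obtain ⟨τ, hτ0, hτ⟩ := ENNReal.lt_iff_exists_nnreal_btwn.1 hH
  have hτ0 : (0 : ℝ) < τ := by exact_mod_cast hτ0
  have hμ : μH[(τ : ℝ)] F ≠ 0 := by
    rw [hausdorffMeasure_of_lt_dimH hτ]; exact ENNReal.top_ne_zero
  obtain ⟨κ₀, hκ₀⟩ := exists_nat_gt (1 / (τ : ℝ))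
  obtain ⟨κ, hκ1, hκ⟩ : ∃ κ : ℕ, 1 ≤ κ ∧ 1 < κ * (τ : ℝ) := by
    refine ⟨κ₀, ?_, by rwa [div_lt_iff₀ hτ0] at hκ₀⟩
    have : (0 : ℝ) < κ₀ := lt_trans (by positivity) hκ₀
    exact_mod_cast this
  have hκr : (1 : ℝ) ≤ κ := by exact_mod_cast hκ1
  set η := 2 * s - d with hη
  have hη0 : 0 < η := by rw [hη]; linarith
  set δ := η / (20 * κ) with hδ
  have hδ0 : 0 < δ := by positivity
  have hδκ : δ * κ = η / 20 := by rw [hδ]; field_simp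
  have hδη : δ ≤ η / 20 := by nlinarith
  have ht0 : 0 ≤ s - δ := by linarith
  obtain ⟨C₁, hC₁, hcov⟩ := exists_coverBound_of_assouadDim_lt (E := F) (α := s + δ) (by linarith)
  set C' := max 1 (3 * C₁ * 2 ^ (s + δ)) with hC'
  have hF : ∀ (T : Finset (ℝ × ℝ)) (f : ℝ × ℝ → ℝ) (i : ℤ) (n : ℕ), (∀ p ∈ T, f p ∈ F) →
      (∀ p ∈ T, ∀ q ∈ T, dyadic i (f p) = dyadic i (f q)) →
      ((T.image fun p => dyadic (i + n) (f p)).card : ℝ) ≤ C' * 2 ^ ((s + δ) * n) := by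
    intro T f i n hf hT
    refine le_trans (le_of_eq (by congr!)) ((card_image_dyadic_le_of_coverBound hcov T f hf i n hC₁
      hT).trans (mul_le_mul_of_nonneg_right (le_max_right _ _) (by positivity)))
  -- choice of the constants
  set K := 8 * ((1 + κ) * ((d + 1) * ℓ + 1)) / (η * ℓ) with hK
  have hK0 : 0 < K := by positivity
  have hKb : (1 + κ) * ((d + 1) * ℓ + 1) / K = η * ℓ / 8 := by
    rw [hK]; field_simp
  set C8 := ℓ * (6 + 2 * (2 * (Λ * (1 + B)))) with hC8
  have hC80 : 0 ≤ C8 := by positivity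
  obtain ⟨m₁, hm₁⟩ := pow_unbounded_of_one_lt (Λ + 1) (show (1 : ℝ) < 2 by norm_num)
  obtain ⟨m₂, hm₂⟩ := exists_nat_gt (C8 / (η * ℓ / 8))
  set m := m₁ + m₂ + 1 with hm
  have hmΛ : Λ + 1 ≤ 2 ^ m :=
    hm₁.le.trans (pow_le_pow_right₀ (by norm_num) (by omega))
  have hmC : C8 ≤ m * (η * ℓ / 8) := by
    rw [div_lt_iff₀ (by positivity)] at hm₂
    refine hm₂.le.trans ?_
    gcongr
    omega
  set P := 3 * ℓ * (2 * (Λ * (1 + B)) * 2 ^ (3 * m)) ^ 2 + 1 with hP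
  have hP0 : 0 < P := by positivity
  set ε := min 1 (η * ℓ / (16 * P * (1 + κ))) with hε
  have hε0 : 0 < ε := lt_min one_pos (by positivity)
  have hε1 : ε ≤ 1 := min_le_left _ _
  have hεP : 2 * P * ε * (1 + κ) ≤ η * ℓ / 8 := by
    have h1 : ε ≤ η * ℓ / (16 * P * (1 + κ)) := min_le_right _ _
    rw [le_div_iff₀ (by positivity)] at h1
    linarith
  set Q := (Real.log (2 * (Λ * (1 + B) + B) + 2) + 2 * m * ℓ) + 2 * Real.log C' + Real.log C with hQ
  obtain ⟨W₁, hW₁⟩ := exists_nat_gt (Q / (η * ℓ / 4))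
  obtain ⟨W₂, hW₂⟩ := exists_nat_gt (Real.log C / ℓ)
  obtain ⟨I, hI⟩ := exists_nat_gt (((d + 1) * ℓ - 2 * K * (s - δ) * ℓ + 2 * K * ℓ) / ε)
  obtain ⟨w, hwW, hwm, hwd, e, he, hsep⟩ := exists_separated_tree hτ0 hμ h.bound hκ
    (m := m) (W := W₁ + W₂ + 2 * m) (by omega) (by omega) I
  have hw1 : ∀ i, 1 ≤ w i := fun i => by have := hwW i; omega
  have hcR : ∀ i c, HasGain F cell e K (w i) c →
      c ≤ (d + 1) * ℓ - 2 * K * (s - δ) * ℓ := by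
    intro i c hc
    refine h.gain_le_of_lt_assouadDim he hK0.le ht0 (by rw [← hs]; linarith) (hw1 i) ?_ hc
    rw [div_lt_iff₀ hℓ] at hW₂
    have : (W₂ : ℝ) ≤ w i := by exact_mod_cast (by have := hwW i; omega : W₂ ≤ w i)
    nlinarith
  have hstep : ∀ (i : Fin I) (c : ℝ), HasGain F cell e K (w i) c →
      HasGain F cell e K ((1 + κ) * w i) (c + ε) := by
    intro i c hc
    obtain ⟨N, hN⟩ := hwm i
    rw [mul_comm] at hN
    have hWi := hwW i
    have hN2 : 2 ≤ N := by
      by_contra! hlt2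
      have : N * m ≤ 1 * m := Nat.mul_le_mul_right m (by omega)
      omega
    have hcR' := hcR i c hc
    have hsepi := hsep i
    have hWN : (W₁ : ℝ) ≤ N * m := by exact_mod_cast (by omega : W₁ ≤ N * m)
    rw [hN] at hc hsepi ⊢
    refine h.hasGain_step he (involutive_flip i).toPerm hK0 (le_max_left _ _) hF hmΛ hN2 hκ1
      (fun σ => (hsepi σ).1) (fun σ => (hsepi σ).2) hcR' ?_ hc
    have hbr : η * ℓ * (3 / 8) ≤ (2 * (s - δ) - d) * ℓ - 2 * (s + δ - (s - δ)) * κ * ℓ -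
        (1 + κ) * ((d + 1) * ℓ + ε) / K - 2 * P * ε * (1 + κ) := by
      have h1 : (1 + κ) * ((d + 1) * ℓ + ε) / K ≤ (1 + κ) * ((d + 1) * ℓ + 1) / K := by gcongr
      have h2 : 2 * (s + δ - (s - δ)) * κ * ℓ = 4 * (δ * κ) * ℓ := by ring
      have h3 : δ * ℓ ≤ η / 20 * ℓ := by gcongr
      have h4 : (2 * (s - δ) - d) * ℓ = η * ℓ - 2 * (δ * ℓ) := by rw [hη]; ring
      have h5 : 0 < η * ℓ := by positivity
      rw [h2, hδκ, h4]
      linarith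
    have h6 := mul_le_mul_of_nonneg_left hbr (show (0 : ℝ) ≤ N * m by positivity)
    have h7 : (N : ℝ) * C8 ≤ N * (m * (η * ℓ / 8)) := by gcongr
    have h8 : Q < N * m * (η * ℓ / 4) := by
      rw [div_lt_iff₀ (by positivity)] at hW₁
      refine hW₁.trans_le ?_
      gcongr
    have h9 : (N : ℝ) * m * (η * ℓ * (3 / 8)) = N * (m * (η * ℓ / 8)) + N * m * (η * ℓ / 4) := by
      ring
    refine lt_of_lt_of_le ?_ h6
    rw [h9]
    linarith
  have hfinal := hcR I _ (h.hasGain_of_tree he hw1 hwd (hasGain_trivial e hK0.le (w 0)) hstep I le_rfl)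
  rw [div_lt_iff₀ hε0] at hI
  linarith

end Contradiction

/-- **Theorem 3.10** (sum-product, first part): for non-empty bounded `F ⊆ ℝ` with
`dim_H F > 0`, `dim_A (FF + F) ≥ min{2 dim_A F, 1}`. -/
theorem assouad_sum_product (F : Set ℝ) (hne : F.Nonempty) (hbd : Bornology.IsBounded F)
    (hH : 0 < dimH F) :
    min (2 * assouadDim F) 1 ≤
      assouadDim {w : ℝ | ∃ x ∈ F, ∃ y ∈ F, ∃ z ∈ F, w = x * y + z} := by
  by_contra! hlt
  obtain ⟨d, hd, hd'⟩ := exists_between hlt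
  obtain ⟨hd2, hd1⟩ := lt_min_iff.1 hd'
  obtain ⟨C, hC, hS⟩ := exists_coverBound_of_assouadDim_lt hd
  obtain ⟨B, hB⟩ := hbd.exists_norm_le
  obtain ⟨cell, Λ, C', h⟩ := exists_cellSystem (F := F) (B := max 1 B)
    ((assouadDim_nonneg _).trans hd.le) hd1 hC hS (le_max_left _ _)
    (fun x hx => (hB x hx).trans (le_max_right _ _))
    fun a ha a' ha' e he => ⟨e, he, a', ha', a, ha, add_comm _ _⟩
  exact hd2.not_ge (h.two_mul_assouadDim_le hH)

end
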